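/- arXiv:1501.02045 — 4 statements merged into one kernel-verified Lean document; each statement's English description precedes it below -/
import Mathlib

section
/- Let r₁, …, rₙ be complex numbers with 0 < |r₁| ≤ |r₂| ≤ ⋯ ≤ |rₙ|, and set R_n = |r₁| + ⋯ + |rₙ|, R_{n−1} = |r₁| + ⋯ + |r_{n−1}|. Define T_n = |rₙ| − R_{n−1} if R_{n−1} ≤ |rₙ|, and T_n = 0 otherwise. Then the set { ∑_{j=1}^n c_j r_j : c_j ∈ ℂ, |c_j| = 1 } is exactly the closed annulus { z ∈ ℂ : T_n ≤ |z| ≤ R_n }. -/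
open Finset

/-!
In a real normed space of dimension at least two a sphere centred at the origin is connected, so on
it the distance to a point `z` takes every value between its extremes, attained at the two points
of the sphere on a line through `z`. Hence the Minkowski sum of a sphere and a closed annulus is
again a closed annulus. Starting from the largest sphere and adding the others one at a time, every
annulus met has outer radius at least that of the next sphere, so each step lowers the inner radius
and raises the outer radius by the radius just added. Letting the inner radius become negative, the
annulus then being a disc, spares a case distinction.
-/

open Metric
open scoped Pointwise

section NormedSpace

variable {E : Type*} [NormedAddCommGroup E] [NormedSpace ℝ E]

lemma exists_sameRay_norm_eq [Nontrivial E] (z : E) {b : ℝ} (hb : 0 ≤ b) :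
    ∃ v : E, SameRay ℝ z v ∧ ‖v‖ = b := by
  obtain rfl | hz := eq_or_ne z 0
  · exact (exists_norm_eq E hb).imp fun v hv => ⟨SameRay.zero_left v, hv⟩
  · refine ⟨(b / ‖z‖) • z, SameRay.sameRay_nonneg_smul_right z (by positivity), ?_⟩
    rw [norm_smul_of_nonneg (by positivity), div_mul_cancel₀ b (norm_ne_zero_iff.2 hz)]

lemma image_norm_sub_sphere_zero (hE : 1 < Module.rank ℝ E) (z : E) {b : ℝ} (hb : 0 ≤ b) :
    (fun v => ‖z - v‖) '' sphere 0 b = Set.Icc |‖z‖ - b| (‖z‖ + b) := by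
  refine Set.Subset.antisymm ?_ ?_
  · rintro _ ⟨v, hv, rfl⟩
    rw [← mem_sphere_zero_iff_norm.1 hv]
    exact ⟨abs_norm_sub_norm_le z v, norm_sub_le z v⟩
  · have : Nontrivial E := rank_pos_iff_nontrivial.1 (zero_lt_one.trans hE)
    obtain ⟨v, hzv, hv⟩ := exists_sameRay_norm_eq z hb
    have hnear : ‖z - v‖ = |‖z‖ - b| := by rw [hzv.norm_sub, hv]
    have hfar : ‖z - -v‖ = ‖z‖ + b := by rw [sub_neg_eq_add, hzv.norm_add, hv]
    rw [← hnear, ← hfar]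
    exact (isPreconnected_sphere hE 0 b).intermediate_value (f := fun v => ‖z - v‖)
      (by simpa using hv) (by simpa using hv) (by fun_prop)

lemma sphere_add_norm_preimage_Icc (hE : 1 < Module.rank ℝ E) {b t R : ℝ} (hb : 0 ≤ b)
    (htR : t ≤ R) :
    sphere (0 : E) b + norm ⁻¹' Set.Icc t R = norm ⁻¹' Set.Icc (max (t - b) (b - R)) (R + b) := by
  ext z
  constructor
  · rintro ⟨v, hv, w, ⟨htw, hwR⟩, rfl⟩
    rw [mem_sphere_zero_iff_norm] at hv
    have hlower : |‖v‖ - ‖w‖| ≤ ‖v + w‖ := by simpa using abs_norm_sub_norm_le v (-w)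
    have hupper := norm_add_le v w
    rw [abs_le] at hlower
    exact ⟨max_le (by linarith) (by linarith), by linarith⟩
  · rintro ⟨hlower, hupper⟩
    rw [max_le_iff] at hlower
    have hdist : max |‖z‖ - b| t ∈ Set.Icc |‖z‖ - b| (‖z‖ + b) :=
      ⟨le_max_left _ _,
        max_le (abs_le.2 ⟨by linarith [norm_nonneg z], by linarith⟩) (by linarith)⟩
    rw [← image_norm_sub_sphere_zero hE z hb] at hdist
    obtain ⟨v, hv, hzv : ‖z - v‖ = max |‖z‖ - b| t⟩ := hdist
    refine ⟨v, hv, z - v, ⟨?_, ?_⟩, add_sub_cancel v z⟩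
    · exact hzv ▸ le_max_right _ _
    · exact hzv ▸ max_le (abs_le.2 ⟨by linarith, by linarith⟩) htR

lemma sphere_add_sum_sphere (hE : 1 < Module.rank ℝ E) {ι : Type*} {s : Finset ι} {a : ι → ℝ}
    {A : ℝ} (ha : ∀ j ∈ s, 0 ≤ a j) (haA : ∀ j ∈ s, a j ≤ A) :
    sphere (0 : E) A + ∑ j ∈ s, sphere 0 (a j) =
      norm ⁻¹' Set.Icc (A - ∑ j ∈ s, a j) (A + ∑ j ∈ s, a j) := by
  induction s using Finset.cons_induction with
  | empty => ext z; simp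
  | cons k s hk ih =>
    rw [forall_mem_cons] at ha haA
    have hsum : 0 ≤ ∑ j ∈ s, a j := sum_nonneg ha.2
    rw [sum_cons, sum_cons, add_left_comm, ih ha.2 haA.2,
      sphere_add_norm_preimage_Icc hE ha.1 (by linarith), max_eq_left (by linarith [ha.1, haA.1])]
    congr 2 <;> ring

theorem statement_4_general (hE : 1 < Module.rank ℝ E) {ι : Type*} [Fintype ι] [DecidableEq ι]
    {a : ι → ℝ} (ha : ∀ j, 0 ≤ a j) {m : ι} (hm : ∀ j, a j ≤ a m) :
    ∑ j, sphere (0 : E) (a j) =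
      {z : E |
        (if ∑ j ∈ univ.erase m, a j ≤ a m then a m - ∑ j ∈ univ.erase m, a j else 0) ≤ ‖z‖ ∧
          ‖z‖ ≤ ∑ j, a j} := by
  rw [← add_sum_erase _ _ (mem_univ m), ← add_sum_erase _ a (mem_univ m),
    sphere_add_sum_sphere hE (fun j _ => ha j) fun j _ => hm j]
  ext z
  refine and_congr_left fun _ => ?_
  split_ifs with h
  · rfl
  · exact iff_of_true (by linarith [norm_nonneg z]) (norm_nonneg z)

end NormedSpace

section NormedDivisionRing

variable {𝕜 : Type*} [NormedDivisionRing 𝕜]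

lemma sphere_zero_norm_eq_image_mul_right (r : 𝕜) :
    sphere (0 : 𝕜) ‖r‖ = (· * r) '' sphere 0 1 := by
  ext v
  simp only [Set.mem_image, mem_sphere_zero_iff_norm]
  constructor
  · intro hv
    obtain rfl | hr := eq_or_ne r 0
    · exact ⟨1, norm_one, by simp only [norm_eq_zero.1 (hv.trans norm_zero), mul_zero]⟩
    · exact ⟨v / r, by rw [norm_div, hv, div_self (norm_ne_zero_iff.2 hr)], div_mul_cancel₀ v hr⟩
  · rintro ⟨c, hc, rfl⟩
    rw [norm_mul, hc, one_mul]

lemma setOf_exists_norm_eq_one_eq_sum_sphere {ι : Type*} [Fintype ι] (r : ι → 𝕜) :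
    {z : 𝕜 | ∃ c : ι → 𝕜, (∀ j, ‖c j‖ = 1) ∧ z = ∑ j, c j * r j} = ∑ j, sphere 0 ‖r j‖ := by
  ext z
  simp only [sphere_zero_norm_eq_image_mul_right, Set.mem_fintype_sum, Set.mem_image,
    mem_sphere_zero_iff_norm]
  constructor
  · rintro ⟨c, hc, rfl⟩
    exact ⟨fun j => c j * r j, fun j => ⟨c j, hc j, rfl⟩, rfl⟩
  · rintro ⟨v, hv, rfl⟩
    choose c hc hcr using hv
    exact ⟨c, hc, by simp only [hcr]⟩

end NormedDivisionRing

/-- Let `r₀, …, rₙ` be complex numbers with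
`0 < ‖r₀‖ ≤ ‖r₁‖ ≤ ⋯ ≤ ‖rₙ‖`, let `Rₙ = ∑ⱼ ‖rⱼ‖`, let `R_{n-1}` be the sum of all but
the last and let `Tₙ = ‖rₙ‖ - R_{n-1}` if `R_{n-1} ≤ ‖rₙ‖` and `Tₙ = 0` otherwise.
Then `{∑ⱼ cⱼ rⱼ : ‖cⱼ‖ = 1}` is exactly the closed annulus `{z : Tₙ ≤ ‖z‖ ≤ Rₙ}`. -/
theorem statement_4 (n : ℕ) (r : Fin (n + 1) → ℂ)
    (hpos : 0 < ‖r 0‖)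
    (hmono : ∀ i j : Fin (n + 1), i ≤ j → ‖r i‖ ≤ ‖r j‖) :
    {z : ℂ | ∃ c : Fin (n + 1) → ℂ, (∀ j, ‖c j‖ = 1) ∧ z = ∑ j, c j * r j} =
      {z : ℂ |
        (if (∑ j ∈ Finset.univ.erase (Fin.last n), ‖r j‖) ≤ ‖r (Fin.last n)‖ then
            ‖r (Fin.last n)‖ - ∑ j ∈ Finset.univ.erase (Fin.last n), ‖r j‖
          else 0) ≤ ‖z‖ ∧ ‖z‖ ≤ ∑ j, ‖r j‖} := by
  rw [setOf_exists_norm_eq_one_eq_sum_sphere]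
  exact statement_4_general (Complex.rank_real_complex ▸ Nat.one_lt_ofNat)
    (fun j => norm_nonneg (r j)) fun j => hmono j _ (Fin.le_last j)
end

section
/- Let b(p) be complex numbers indexed by primes p, let m be a non-negative integer, and assume: (i) for every ε > 0 one has b(p) ≪ p^ε; (ii) (1/((log x)^m π(x))) ∑_{p ≤ x} |b(p)|² → κ as x → ∞ for some real κ > 0 (sum over primes p ≤ x). Then for every c > 1, η > 0 and ε > 0 there is a constant A > 0 and x₀ such that for all x ≥ x₀, the number of primes p with x < p ≤ cx and |b(p)| > p^{−η} is at least A·x^{1−ε}. -/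
open Complex Filter Finset

/-- The finset of primes `p ≤ x`. -/
noncomputable def primesUpTo (x : ℝ) : Finset ℕ :=
  (Finset.range (⌊x⌋₊ + 1)).filter Nat.Prime

/-!
The Wiener–Ikehara method gives `≫ x / log x` primes in `(x, cx]` for every `c > 1`. The Dirichlet
series of `Λ` minus `1 / (s - 1)` extends continuously to `Re s ≥ 1`; test it against the Fourier
transform of a compactly supported function whose real part has positive integral but is nonpositive
off the window, so that only the prime powers in the window can account for the main term.

Since `log ^ m` varies slowly, comparing the mean squares up to `x` and up to `cx` gives
`∑ ‖b p‖ ^ 2 ≫ x (log x) ^ (m - 1)` over `x < p ≤ cx`. The primes with `‖b p‖ ≤ p ^ (-η)`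
contribute only `O(x ^ (1 - 2η))`, and each of the others at most `O(x ^ (2θ))` if
`b p = O(p ^ θ)`; hence there are `≫ x ^ (1 - ε)` of the latter for any `ε > 2θ`.
-/

section BandLimitedMinorant

open MeasureTheory FourierTransform ComplexOrder
open scoped SchwartzMap

lemma conj_fourier_ofReal_of_even {f : ℝ → ℝ} (hf : f.Even) (w : ℝ) :
    starRingEnd ℂ (𝓕 (fun x ↦ (f x : ℂ)) w) = 𝓕 (fun x ↦ (f x : ℂ)) w := by
  rw [Real.fourier_real_eq_integral_exp_smul, ← integral_conj,
    ← integral_neg_eq_self (fun v : ℝ ↦ cexp (↑(-2 * Real.pi * v * w) * I) • (f v : ℂ))]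
  congr 1 with v
  simp [← Complex.exp_conj, hf v, Complex.conj_ofNat]

lemma fourier_comp_div {E : Type*} [NormedAddCommGroup E] [NormedSpace ℂ E] (f : ℝ → E) {l : ℝ}
    (hl : 0 < l) (w : ℝ) : 𝓕 (fun t ↦ f (t / l)) w = l • 𝓕 f (l * w) := by
  have hscale := Measure.integral_comp_div (fun v ↦ 𝐞 (-(v * (l * w))) • f v) l
  rw [abs_of_pos hl] at hscale
  rw [Real.fourier_real_eq, Real.fourier_real_eq, ← hscale]
  congr 1 with t
  rw [← mul_assoc, div_mul_cancel₀ t hl.ne']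

lemma fourier_derivCLM (h : 𝓢(ℝ, ℂ)) (w : ℝ) :
    𝓕 (SchwartzMap.derivCLM ℂ ℂ h) w = 2 * Real.pi * I * w * 𝓕 h w :=
  congrFun (Real.fourier_deriv h.integrable h.differentiable
    (SchwartzMap.derivCLM ℂ ℂ h).integrable) w

-- The autocorrelation of an even bump: its Fourier transform is the square of a real number.
lemma exists_hasCompactSupport_fourier_nonneg :
    ∃ h : 𝓢(ℝ, ℂ), HasCompactSupport h ∧ 0 < h 0 ∧ ∀ w, 0 ≤ 𝓕 h w := by
  let β : ContDiffBump (0 : ℝ) := ⟨1, 2, one_pos, one_lt_two⟩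
  have hβ_supp : HasCompactSupport fun x ↦ (β x : ℂ) :=
    β.hasCompactSupport.comp_left (g := ofReal) rfl
  let f : 𝓢(ℝ, ℂ) := hβ_supp.toSchwartzMap (ofRealCLM.contDiff.comp (n := (⊤ : ℕ∞)) β.contDiff)
  let h : 𝓢(ℝ, ℂ) := SchwartzMap.convolution (ContinuousLinearMap.mul ℂ ℂ) f f
  have h_eq : (h : ℝ → ℂ) = convolution f f (ContinuousLinearMap.mul ℂ ℂ) volume :=
    funext (SchwartzMap.convolution_apply _ f f)
  refine ⟨h, h_eq ▸ HasCompactSupport.convolution _ hβ_supp hβ_supp, ?_, fun w ↦ ?_⟩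
  · have h_zero : h 0 = ((∫ x, β x ^ 2 : ℝ) : ℂ) := by
      rw [h_eq, convolution_def, ← integral_complex_ofReal]
      congr 1 with x
      change (β x : ℂ) * β (0 - x) = _
      rw [zero_sub, β.neg, ofReal_pow, sq]
    have hβ_cont : Continuous fun x ↦ β x ^ 2 := β.continuous.pow 2
    rw [h_zero, zero_lt_real]
    refine hβ_cont.integral_pos_of_hasCompactSupport_nonneg_nonzero ?_ (fun x ↦ sq_nonneg _)
      (x := 0) (pow_ne_zero _ ?_)
    · exact β.hasCompactSupport.comp_left (g := (· ^ 2)) (by simp)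
    · exact (β.pos_of_mem_ball (Metric.mem_ball_self two_pos)).ne'
  · obtain ⟨r, hr⟩ := conj_eq_iff_real.1 (conj_fourier_ofReal_of_even (f := β) β.neg w)
    have hF : 𝓕 h w = (r : ℂ) * r := by
      rw [SchwartzMap.fourier_coe, h_eq, Real.fourier_mul_convolution_eq f.integrable f.integrable]
      exact congrArg₂ _ hr hr
    rw [hF, ← ofReal_mul, zero_le_real]
    exact mul_self_nonneg r

-- `w ↦ a ^ 2 - w ^ 2` is the Fourier multiplier of `a ^ 2 + (4π²)⁻¹ d²/dt²`.
lemma exists_hasCompactSupport_fourier_nonpos :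
    ∃ (φ : 𝓢(ℝ, ℂ)) (a : ℝ), HasCompactSupport φ ∧ 0 < a ∧ 0 < (φ 0).re ∧
      ∀ w, a ≤ |w| → (𝓕 φ w).re ≤ 0 := by
  obtain ⟨h, h_supp, h_zero, hF_nonneg⟩ := exists_hasCompactSupport_fourier_nonneg
  let D := SchwartzMap.derivCLM ℂ ℂ
  let k : ℂ := ((4 * Real.pi ^ 2)⁻¹ : ℝ)
  have hD_supp : HasCompactSupport (D (D h)) := h_supp.deriv.deriv
  obtain ⟨a, ha_zero, ha⟩ : ∃ a : ℝ, -(k * D (D h) 0).re < a ^ 2 * (h 0).re ∧ 0 < a :=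
    ((((tendsto_pow_atTop two_ne_zero).atTop_mul_const (pos_iff.1 h_zero).1).eventually_gt_atTop
      _).and (eventually_gt_atTop 0)).exists
  let φ : 𝓢(ℝ, ℂ) := ((a ^ 2 : ℝ) : ℂ) • h + k • D (D h)
  have hF (w : ℝ) : 𝓕 φ w = ((a ^ 2 - w ^ 2 : ℝ) : ℂ) * 𝓕 h w := by
    have hπ : (Real.pi : ℂ) ≠ 0 := ofReal_ne_zero.2 Real.pi_ne_zero
    simp only [φ, k, D, FourierTransform.fourier_add, FourierTransform.fourier_smul, add_apply,
      smul_apply, smul_eq_mul, fourier_derivCLM]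
    push_cast
    field_simp
    linear_combination (4 * 𝓕 h w * w ^ 2) * I_sq
  refine ⟨φ, a, ?_, ha, ?_, fun w hw ↦ ?_⟩
  · exact (h_supp.comp_left (g := fun z ↦ ((a ^ 2 : ℝ) : ℂ) • z) (smul_zero _)).add
      (hD_supp.comp_left (g := fun z ↦ k • z) (smul_zero _))
  · simp only [φ, add_apply, smul_apply, smul_eq_mul, add_re, re_ofReal_mul]
    linarith
  · rw [hF, re_ofReal_mul]
    have hwa : a ^ 2 ≤ w ^ 2 := by
      rw [← sq_abs w]
      gcongr
    exact mul_nonpos_of_nonpos_of_nonneg (sub_nonpos.2 hwa) (nonneg_iff.1 (hF_nonneg w)).1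

lemma exists_hasCompactSupport_fourier_nonpos_of_le_abs {r : ℝ} (hr : 0 < r) :
    ∃ φ : 𝓢(ℝ, ℂ), HasCompactSupport φ ∧ 0 < (φ 0).re ∧ ∀ w, r ≤ |w| → (𝓕 φ w).re ≤ 0 := by
  obtain ⟨φ, a, hφ_supp, ha, hφ_zero, hφF⟩ := exists_hasCompactSupport_fourier_nonpos
  have hl : 0 < a / r := by positivity
  let e : ℝ ≃L[ℝ] ℝ := ContinuousLinearEquiv.unitsEquivAut ℝ (Units.mk0 (a / r)⁻¹ (by positivity))
  let ψ : 𝓢(ℝ, ℂ) := SchwartzMap.compCLMOfContinuousLinearEquiv ℂ e φ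
  have hψ : (ψ : ℝ → ℂ) = fun t ↦ φ (t / (a / r)) := rfl
  refine ⟨ψ, hφ_supp.comp_homeomorph e.toHomeomorph, by simpa [hψ] using hφ_zero, fun w hw ↦ ?_⟩
  rw [SchwartzMap.fourier_coe, hψ, fourier_comp_div _ hl, smul_re, smul_eq_mul]
  refine mul_nonpos_of_nonneg_of_nonpos hl.le (hφF _ ?_)
  rwa [abs_mul, abs_of_pos hl, div_mul_eq_mul_div, le_div_iff₀ hr, mul_le_mul_iff_right₀ ha]

end BandLimitedMinorant

section WienerIkehara

open MeasureTheory FourierTransform Topology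

lemma integral_mul_fourier_sub {α : Type*} [MeasurableSpace α] {μ : Measure α} [SFinite μ]
    {k : α → ℂ} (hk : Integrable k μ) {u : α → ℝ} (hu : Measurable u) {φ : ℝ → ℂ}
    (hφ : Integrable φ) (y : ℝ) :
    ∫ x, k x * 𝓕 φ (y - u x) ∂μ = 𝓕 (fun t ↦ φ t * ∫ x, 𝐞 (t * u x) • k x ∂μ) y := by
  have hint : Integrable (Function.uncurry fun x t ↦ 𝐞 (-(t * (y - u x))) • (k x * φ t))
      (μ.prod volume) := by
    refine (hk.mul_prod hφ).mono ?_ (ae_of_all _ fun p ↦ (Circle.norm_smul _ _).le)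
    have hphase : Measurable fun p : α × ℝ ↦ -(p.2 * (y - u p.1)) := by fun_prop
    exact (Real.continuous_fourierChar.comp_aestronglyMeasurable
      hphase.aestronglyMeasurable).smul (hk.mul_prod hφ).1
  calc ∫ x, k x * 𝓕 φ (y - u x) ∂μ
      = ∫ x, (∫ t, 𝐞 (-(t * (y - u x))) • (k x * φ t)) ∂μ := by
        simp_rw [Real.fourier_real_eq, ← integral_const_mul, mul_smul_comm]
    _ = ∫ t, ∫ x, 𝐞 (-(t * (y - u x))) • (k x * φ t) ∂μ := integral_integral_swap hint
    _ = 𝓕 (fun t ↦ φ t * ∫ x, 𝐞 (t * u x) • k x ∂μ) y := by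
        rw [Real.fourier_real_eq]
        congr 1 with t
        rw [← integral_const_mul, Circle.smul_def, ← integral_smul]
        congr 1 with x
        rw [show -(t * (y - u x)) = -(t * y) + t * u x by ring, AddChar.map_add_eq_mul, mul_smul,
          mul_smul_comm, mul_comm (k x)]
        rfl

/-- The smoothed Dirichlet series `∑ a(n) n⁻ˢ g(y - log n)`: for `g` concentrated near `0` it
weighs the terms with `n` close to `exp y`. -/
noncomputable def smoothedLSeries (a : ℕ → ℂ) (s : ℂ) (g : ℝ → ℂ) (y : ℝ) : ℂ :=
  ∑' n, LSeries.term a s n * g (y - Real.log n)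

lemma fourierChar_mul_log_smul_term (a : ℕ → ℂ) (s : ℂ) (t : ℝ) (n : ℕ) :
    𝐞 (t * Real.log n) • LSeries.term a s n = LSeries.term a (s - 2 * Real.pi * t * I) n := by
  rcases eq_or_ne n 0 with rfl | hn
  · simp
  have hn' : (n : ℂ) ≠ 0 := Nat.cast_ne_zero.2 hn
  rw [LSeries.term_of_ne_zero hn, LSeries.term_of_ne_zero hn, Circle.smul_def,
    Real.fourierChar_apply, cpow_sub _ _ hn', cpow_def_of_ne_zero hn' (2 * Real.pi * t * I),
    ← natCast_log, smul_eq_mul, div_div_eq_mul_div, mul_comm, mul_div_right_comm]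
  push_cast
  ring_nf

lemma summable_norm_term_mul {a : ℕ → ℂ} {s : ℂ} (ha : LSeriesSummable a s) {k : ℕ → ℂ} {B : ℝ}
    (hk : ∀ n, ‖k n‖ ≤ B) : Summable fun n ↦ ‖LSeries.term a s n * k n‖ := by
  refine (ha.norm.mul_right B).of_nonneg_of_le (fun n ↦ norm_nonneg _) fun n ↦ ?_
  rw [norm_mul]
  gcongr
  exact hk n

lemma smoothedLSeries_fourier {a : ℕ → ℂ} {s : ℂ} (ha : LSeriesSummable a s) {φ : ℝ → ℂ}
    (hφ : Integrable φ) (y : ℝ) :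
    smoothedLSeries a s (𝓕 φ) y =
      𝓕 (fun t : ℝ ↦ φ t * LSeries a (s - 2 * Real.pi * t * I)) y := by
  have hcount : Integrable (LSeries.term a s) Measure.count := integrable_count_iff.2 ha.norm
  have htsum {k : ℕ → ℂ} (hk : Summable fun n ↦ ‖k n‖) : ∫ n, k n ∂Measure.count = ∑' n, k n := by
    simp [integral_countable (integrable_count_iff.2 hk)]
  have hF_le (w : ℝ) : ‖𝓕 φ w‖ ≤ ∫ t, ‖φ t‖ :=
    VectorFourier.norm_fourierIntegral_le_integral_norm _ _ _ _ _
  have hkernel := summable_norm_term_mul ha fun n ↦ hF_le (y - Real.log n)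
  rw [smoothedLSeries, ← htsum hkernel, integral_mul_fourier_sub hcount measurable_from_nat hφ]
  refine congrFun (congrArg 𝓕 (funext fun t ↦ ?_)) y
  rw [htsum (by simpa only [Circle.norm_smul] using ha.norm)]
  simp only [fourierChar_mul_log_smul_term, LSeries]

lemma integral_cexp_mul_fourier_sub {z : ℂ} (hz : 0 < z.re) {φ : ℝ → ℂ} (hφ : Integrable φ)
    (y : ℝ) :
    ∫ u in Set.Ioi (0 : ℝ), cexp (-z * u) * 𝓕 φ (y - u) =
      𝓕 (fun t : ℝ ↦ φ t * (z - 2 * Real.pi * t * I)⁻¹) y := by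
  have hexp : IntegrableOn (fun u : ℝ ↦ cexp (-z * u)) (Set.Ioi 0) :=
    integrableOn_exp_mul_complex_Ioi (by simpa using hz) 0
  refine (integral_mul_fourier_sub hexp measurable_id hφ y).trans
    (congrFun (congrArg 𝓕 (funext fun t ↦ ?_)) y)
  have hzt : (-(z - 2 * Real.pi * t * I)).re < 0 := by simpa using hz
  have hcombine (u : ℝ) :
      𝐞 (t * u) • cexp (-z * u) = cexp (-(z - 2 * Real.pi * t * I) * u) := by
    rw [Circle.smul_def, Real.fourierChar_apply, smul_eq_mul, ← Complex.exp_add]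
    push_cast
    ring_nf
  simp only [id_eq, hcombine, integral_exp_mul_complex_Ioi hzt, ofReal_zero, mul_zero,
    Complex.exp_zero, neg_div_neg_eq, one_div]

lemma continuous_mul_comp_sub_mul_I {G : ℂ → ℂ} {S : Set ℝ} (hG : ContinuousOn G (re ⁻¹' S))
    {φ : ℝ → ℂ} (hφ : Continuous φ) {s : ℂ} (hs : s.re ∈ S) :
    Continuous fun t : ℝ ↦ φ t * G (s - 2 * Real.pi * t * I) := by
  refine hφ.mul (hG.comp_continuous (by fun_prop) fun t ↦ ?_)
  simpa using hs

lemma fourier_add_const_smul {E : Type*} [NormedAddCommGroup E] [NormedSpace ℂ E] {f g : ℝ → E}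
    (hf : Integrable f) (hg : Integrable g) (z : ℂ) : 𝓕 (f + z • g) = 𝓕 f + z • 𝓕 g := by
  have hadd : 𝓕 (f + z • g) = 𝓕 f + 𝓕 (z • g) := VectorFourier.fourierIntegral_add
    Real.continuous_fourierChar continuous_inner hf (hg.smul z)
  exact hadd.trans (congrArg (𝓕 f + ·) (VectorFourier.fourierIntegral_const_smul _ _ _ _ _))

lemma smoothedLSeries_fourier_eq_add {a : ℕ → ℂ} {s A : ℂ} {G : ℂ → ℂ} (hs : 1 < s.re)
    (ha : LSeriesSummable a s) (hG : ContinuousOn G {s | 1 < s.re})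
    (hGa : Set.EqOn G (fun s ↦ LSeries a s - A / (s - 1)) {s | 1 < s.re})
    {φ : ℝ → ℂ} (hφ : Continuous φ) (hφ_supp : HasCompactSupport φ) (y : ℝ) :
    smoothedLSeries a s (𝓕 φ) y = 𝓕 (fun t : ℝ ↦ φ t * G (s - 2 * Real.pi * t * I)) y +
      A * ∫ u in Set.Ioi (0 : ℝ), cexp (-(s - 1) * u) * 𝓕 φ (y - u) := by
  have hφ_int : Integrable φ := hφ.integrable_of_hasCompactSupport hφ_supp
  have hreg : Integrable fun t : ℝ ↦ φ t * G (s - 2 * Real.pi * t * I) :=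
    (continuous_mul_comp_sub_mul_I (S := Set.Ioi 1) hG hφ hs).integrable_of_hasCompactSupport
      hφ_supp.mul_right
  have hpole : Integrable fun t : ℝ ↦ φ t * (s - 1 - 2 * Real.pi * t * I)⁻¹ := by
    refine Continuous.integrable_of_hasCompactSupport ?_ hφ_supp.mul_right
    refine hφ.mul (Continuous.inv₀ (by fun_prop) fun t h ↦ ?_)
    have hre : s.re - 1 = 0 := by simpa using congrArg re h
    linarith
  rw [smoothedLSeries_fourier ha hφ_int, integral_cexp_mul_fourier_sub (by simpa using hs) hφ_int,
    ← smul_eq_mul A, ← Pi.smul_apply, ← Pi.add_apply, ← fourier_add_const_smul hreg hpole]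
  refine congrFun (congrArg 𝓕 (funext fun t ↦ ?_)) y
  have hGt := hGa (x := s - 2 * Real.pi * t * I) (by simpa using hs)
  simp only [Pi.add_apply, Pi.smul_apply, smul_eq_mul, hGt]
  ring

lemma continuousOn_fourier_mul_comp_sub_mul_I {G : ℂ → ℂ} {S : Set ℝ}
    (hG : ContinuousOn G (re ⁻¹' S)) {φ : ℝ → ℂ} (hφ : Continuous φ) (hφ_supp : HasCompactSupport φ)
    (y : ℝ) :
    ContinuousOn (fun σ : ℝ ↦ 𝓕 (fun t : ℝ ↦ φ t * G (σ - 2 * Real.pi * t * I)) y) S := by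
  simp only [Real.fourier_real_eq]
  refine continuousOn_integral_of_compact_support hφ_supp ?_ fun σ t _ ht ↦ ?_
  · have hGσ : ContinuousOn (fun p : ℝ × ℝ ↦ G (p.1 - 2 * Real.pi * p.2 * I)) (S ×ˢ Set.univ) :=
      hG.comp (by fun_prop) fun p hp ↦ by simpa using hp.1
    have hphase : Continuous fun p : ℝ × ℝ ↦ 𝐞 (-(p.2 * y)) :=
      Real.continuous_fourierChar.comp (by fun_prop)
    exact hphase.continuousOn.smul ((hφ.comp continuous_snd).continuousOn.mul hGσ)
  · rw [image_eq_zero_of_notMem_tsupport ht, zero_mul, smul_zero]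

lemma tendsto_integral_cexp_mul_nhdsGT {f : ℝ → ℂ} (hf : IntegrableOn f (Set.Ioi 0)) :
    Tendsto (fun σ : ℝ ↦ ∫ u in Set.Ioi (0 : ℝ), cexp (-(σ - 1) * u) * f u) (𝓝[>] 1)
      (𝓝 (∫ u in Set.Ioi (0 : ℝ), f u)) := by
  refine tendsto_integral_filter_of_dominated_convergence (fun u ↦ ‖f u‖) ?_ ?_ hf.norm ?_
  · refine Eventually.of_forall fun σ ↦ AEStronglyMeasurable.mul ?_ hf.1
    exact Continuous.aestronglyMeasurable (by fun_prop)
  · filter_upwards [self_mem_nhdsWithin] with σ (hσ : 1 < σ)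
    filter_upwards [ae_restrict_mem measurableSet_Ioi] with u (hu : 0 < u)
    have hre : (-((σ : ℂ) - 1) * u).re = -((σ - 1) * u) := by
      rw [re_mul_ofReal, neg_re, sub_re, ofReal_re, one_re, neg_mul]
    rw [norm_mul, Complex.norm_exp, hre]
    refine mul_le_of_le_one_left (norm_nonneg _) (Real.exp_le_one_iff.2 (neg_nonpos.2 ?_))
    exact (mul_pos (sub_pos.2 hσ) hu).le
  · refine Eventually.of_forall fun u ↦ ?_
    have hcont : Continuous fun σ : ℝ ↦ cexp (-(σ - 1) * u) * f u := by fun_prop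
    simpa using (hcont.tendsto 1).mono_left nhdsWithin_le_nhds

lemma tendsto_integral_Ioi_comp_sub {E : Type*} [NormedAddCommGroup E] [NormedSpace ℝ E]
    {f : ℝ → E} (hf : Integrable f) :
    Tendsto (fun y : ℝ ↦ ∫ u in Set.Ioi (0 : ℝ), f (y - u)) atTop (𝓝 (∫ v, f v)) := by
  have hflip (y : ℝ) : ∫ u in Set.Ioi (0 : ℝ), f (y - u) = ∫ v in Set.Iio y, f v := by
    rw [← integral_indicator measurableSet_Ioi, ← integral_indicator measurableSet_Iio,
      ← integral_sub_left_eq_self _ volume y]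
    congr 1 with u
    simp only [Set.indicator_apply, Set.mem_Ioi, Set.mem_Iio, sub_pos, sub_sub_cancel]
  simp_rw [hflip]
  exact (aecover_Iio tendsto_id).integral_tendsto_of_countably_generated hf

lemma integral_fourier_eq_apply_zero {φ : ℝ → ℂ} (hφ : Continuous φ) (hφ_int : Integrable φ)
    (hφF : Integrable (𝓕 φ)) : ∫ w, 𝓕 φ w = φ 0 := by
  have hinv := congrFun (hφ.fourierInv_fourier_eq hφ_int hφF) 0
  simpa [Real.fourierInv_eq] using hinv

lemma tendsto_smoothedLSeries_fourier_nhdsGT {a : ℕ → ℂ} {A : ℂ} {G : ℂ → ℂ}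
    (ha : ∀ s, 1 < s.re → LSeriesSummable a s) (hG : ContinuousOn G {s | 1 ≤ s.re})
    (hGa : Set.EqOn G (fun s ↦ LSeries a s - A / (s - 1)) {s | 1 < s.re}) {φ : ℝ → ℂ}
    (hφ : Continuous φ) (hφ_supp : HasCompactSupport φ) (hφF : Integrable (𝓕 φ)) (y : ℝ) :
    Tendsto (fun σ : ℝ ↦ smoothedLSeries a σ (𝓕 φ) y) (𝓝[>] 1)
      (𝓝 (𝓕 (fun t : ℝ ↦ φ t * G (1 - 2 * Real.pi * t * I)) y +
        A * ∫ u in Set.Ioi (0 : ℝ), 𝓕 φ (y - u))) := by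
  have hreg := (continuousOn_fourier_mul_comp_sub_mul_I (S := Set.Ici 1) hG hφ hφ_supp y
    1 Set.self_mem_Ici).mono_left (nhdsWithin_mono _ Set.Ioi_subset_Ici_self)
  have hpole := tendsto_integral_cexp_mul_nhdsGT (hφF.comp_sub_left y).integrableOn
  simp only [ofReal_one] at hreg
  refine Tendsto.congr' ?_ (hreg.add (hpole.const_mul A))
  filter_upwards [self_mem_nhdsWithin] with σ (hσ : 1 < σ)
  exact (smoothedLSeries_fourier_eq_add hσ (ha σ hσ)
    (hG.mono fun s (hs : 1 < s.re) ↦ hs.le) hGa hφ hφ_supp y).symm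

lemma tendsto_fourier_add_mul_integral_atTop (f : ℝ → ℂ) (A : ℂ) {φ : ℝ → ℂ} (hφ : Continuous φ)
    (hφ_int : Integrable φ) (hφF : Integrable (𝓕 φ)) :
    Tendsto (fun y ↦ 𝓕 f y + A * ∫ u in Set.Ioi (0 : ℝ), 𝓕 φ (y - u)) atTop (𝓝 (A * φ 0)) := by
  have hreg : Tendsto (𝓕 f) atTop (𝓝 0) :=
    (Real.zero_at_infty_fourier f).mono_left atTop_le_cocompact
  have hpole := (tendsto_integral_Ioi_comp_sub hφF).const_mul A
  rw [integral_fourier_eq_apply_zero hφ hφ_int hφF] at hpole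
  simpa only [zero_add] using hreg.add hpole

lemma exists_tendsto_smoothedLSeries_fourier {a : ℕ → ℂ} {A : ℂ} {G : ℂ → ℂ}
    (ha : ∀ s, 1 < s.re → LSeriesSummable a s) (hG : ContinuousOn G {s | 1 ≤ s.re})
    (hGa : Set.EqOn G (fun s ↦ LSeries a s - A / (s - 1)) {s | 1 < s.re}) {φ : ℝ → ℂ}
    (hφ : Continuous φ) (hφ_supp : HasCompactSupport φ) (hφF : Integrable (𝓕 φ)) :
    ∃ R : ℝ → ℂ, (∀ y, Tendsto (fun σ : ℝ ↦ smoothedLSeries a σ (𝓕 φ) y) (𝓝[>] 1) (𝓝 (R y))) ∧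
      Tendsto R atTop (𝓝 (A * φ 0)) :=
  ⟨_, tendsto_smoothedLSeries_fourier_nhdsGT ha hG hGa hφ hφ_supp hφF,
    tendsto_fourier_add_mul_integral_atTop _ A hφ (hφ.integrable_of_hasCompactSupport hφ_supp) hφF⟩

lemma re_term_ofReal_mul (a : ℕ → ℝ) (σ : ℝ) {n : ℕ} (hn : n ≠ 0) (z : ℂ) :
    (LSeries.term (fun n ↦ (a n : ℂ)) σ n * z).re = a n * (n : ℝ) ^ (-σ) * z.re := by
  have hterm : LSeries.term (fun n ↦ (a n : ℂ)) σ n = ((a n * (n : ℝ) ^ (-σ) : ℝ) : ℂ) := by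
    rw [LSeries.term_of_ne_zero hn, ofReal_mul, ofReal_cpow n.cast_nonneg, ofReal_natCast,
      ofReal_neg, cpow_neg, div_eq_mul_inv]
  rw [hterm, re_ofReal_mul]

lemma le_abs_log_add_sub_log {x r : ℝ} (hx : 0 < x) {n : ℕ} (hn : n ≠ 0)
    (hn_window : n ∉ Ioc ⌊x⌋₊ ⌊Real.exp (2 * r) * x⌋₊) : r ≤ |Real.log x + r - Real.log n| := by
  have hn_pos : (0 : ℝ) < n := by positivity
  rw [Finset.mem_Ioc, not_and_or, not_lt, not_le] at hn_window
  rcases hn_window with hle | hlt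
  · have hlog : Real.log n ≤ Real.log x := Real.log_le_log hn_pos ((Nat.le_floor_iff hx.le).1 hle)
    exact le_trans (by linarith) (le_abs_self _)
  · have hlog : Real.log (Real.exp (2 * r) * x) ≤ Real.log n :=
      Real.log_le_log (by positivity) (Nat.lt_of_floor_lt hlt).le
    rw [Real.log_mul (Real.exp_ne_zero _) hx.ne', Real.log_exp] at hlog
    exact le_trans (by linarith) (neg_le_abs _)

lemma re_smoothedLSeries_le {a : ℕ → ℝ} (ha : ∀ n, 0 ≤ a n) {σ : ℝ} (hσ : 1 ≤ σ)
    (hsum : LSeriesSummable (fun n ↦ (a n : ℂ)) σ) {g : ℝ → ℂ} {r B : ℝ} (hgB : ∀ w, ‖g w‖ ≤ B)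
    (hg : ∀ w, r ≤ |w| → (g w).re ≤ 0) {x : ℝ} (hx : 0 < x) :
    (smoothedLSeries (fun n ↦ (a n : ℂ)) σ g (Real.log x + r)).re ≤
      B / x * ∑ n ∈ Ioc ⌊x⌋₊ ⌊Real.exp (2 * r) * x⌋₊, a n := by
  have hsummable :=
    (summable_norm_term_mul hsum fun n : ℕ ↦ hgB (Real.log x + r - Real.log n)).of_norm
  have hB : 0 ≤ B := (norm_nonneg _).trans (hgB 0)
  rw [smoothedLSeries, re_tsum hsummable, ← (hasSum_re hsummable.hasSum).summable.sum_add_tsum_compl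
    (s := Ioc ⌊x⌋₊ ⌊Real.exp (2 * r) * x⌋₊), mul_sum, ← add_zero (∑ n ∈ _, _ * a n)]
  refine add_le_add (sum_le_sum fun n hn ↦ ?_) (tsum_nonpos fun ⟨n, hn⟩ ↦ ?_)
  · have hxn : x < n := Nat.lt_of_floor_lt (Finset.mem_Ioc.1 hn).1
    have hn_ne : n ≠ 0 := by rintro rfl; exact hxn.not_ge (by simpa using hx.le)
    have hn_rpow : (n : ℝ) ^ (-σ) ≤ x⁻¹ := by
      calc (n : ℝ) ^ (-σ) ≤ (n : ℝ) ^ (-1 : ℝ) :=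
            Real.rpow_le_rpow_of_exponent_le (by exact_mod_cast Nat.one_le_iff_ne_zero.2 hn_ne)
              (neg_le_neg hσ)
        _ ≤ x⁻¹ := by
          rw [Real.rpow_neg_one]
          gcongr
    rw [re_term_ofReal_mul a σ hn_ne]
    calc a n * (n : ℝ) ^ (-σ) * (g (Real.log x + r - Real.log n)).re
        ≤ a n * (n : ℝ) ^ (-σ) * B := mul_le_mul_of_nonneg_left ((re_le_norm _).trans (hgB _))
          (mul_nonneg (ha n) (by positivity))
      _ ≤ a n * x⁻¹ * B := by
        gcongr
        exact ha n
      _ = B / x * a n := by ring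
  · rcases eq_or_ne n 0 with rfl | hn_ne
    · simp
    rw [re_term_ofReal_mul a σ hn_ne]
    exact mul_nonpos_of_nonneg_of_nonpos (mul_nonneg (ha n) (by positivity))
      (hg _ (le_abs_log_add_sub_log hx hn_ne (by simpa using hn)))

lemma exists_pos_eventually_mul_le_sum_Ioc {a : ℕ → ℝ} (ha : ∀ n, 0 ≤ a n)
    (hsum : ∀ s : ℂ, 1 < s.re → LSeriesSummable (fun n ↦ (a n : ℂ)) s) {A : ℝ} (hA : 0 < A)
    {G : ℂ → ℂ} (hG : ContinuousOn G {s | 1 ≤ s.re})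
    (hGa : Set.EqOn G (fun s ↦ LSeries (fun n ↦ (a n : ℂ)) s - A / (s - 1)) {s | 1 < s.re})
    {c : ℝ} (hc : 1 < c) :
    ∃ δ : ℝ, 0 < δ ∧ ∀ᶠ x in atTop, δ * x ≤ ∑ n ∈ Ioc ⌊x⌋₊ ⌊c * x⌋₊, a n := by
  let r := Real.log c / 2
  have hr : 0 < r := half_pos (Real.log_pos hc)
  have hexp : Real.exp (2 * r) = c := by
    rw [mul_div_cancel₀ _ two_ne_zero, Real.exp_log (by linarith)]
  obtain ⟨φ, hφ_supp, hφ_zero, hφF⟩ := exists_hasCompactSupport_fourier_nonpos_of_le_abs hr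
  obtain ⟨B, hB, hφB⟩ := (𝓕 φ).decay 0 0
  have hφB' (w : ℝ) : ‖𝓕 (φ : ℝ → ℂ) w‖ ≤ B := by simpa [SchwartzMap.fourier_coe] using hφB w
  obtain ⟨R, hR, hR_lim⟩ := exists_tendsto_smoothedLSeries_fourier hsum hG hGa φ.continuous hφ_supp
    (𝓕 φ).integrable
  have hR_log : Tendsto (fun x ↦ (R (Real.log x + r)).re) atTop (𝓝 (A * (φ 0).re)) := by
    rw [← re_ofReal_mul]
    exact (continuous_re.tendsto _).comp
      (hR_lim.comp (tendsto_atTop_add_const_right _ r Real.tendsto_log_atTop))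
  refine ⟨A * (φ 0).re / 2 / B, by positivity, ?_⟩
  filter_upwards [hR_log.eventually_const_le (half_lt_self (by positivity)), eventually_gt_atTop 0]
    with x hx_R hx
  rw [div_mul_eq_mul_div, div_le_iff₀ hB]
  have hle : (R (Real.log x + r)).re ≤ B / x * ∑ n ∈ Ioc ⌊x⌋₊ ⌊c * x⌋₊, a n := by
    refine le_of_tendsto ((continuous_re.tendsto _).comp (hR _)) ?_
    filter_upwards [self_mem_nhdsWithin] with σ (hσ : 1 < σ)
    exact hexp ▸ re_smoothedLSeries_le ha hσ.le (hsum σ hσ) hφB' hφF hx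
  calc A * (φ 0).re / 2 * x ≤ (B / x * ∑ n ∈ Ioc ⌊x⌋₊ ⌊c * x⌋₊, a n) * x := by
        gcongr
        exact hx_R.trans hle
    _ = (∑ n ∈ Ioc ⌊x⌋₊ ⌊c * x⌋₊, a n) * B := by field_simp

end WienerIkehara

section PrimesInMultiplicativeWindows

open Asymptotics

variable {c : ℝ}

lemma exists_pos_eventually_mul_le_psi_sub (hc : 1 < c) :
    ∃ δ : ℝ, 0 < δ ∧ ∀ᶠ x in atTop, δ * x ≤ Chebyshev.psi (c * x) - Chebyshev.psi x := by
  have hΛ (n : ℕ) : ArithmeticFunction.vonMangoldt.residueClass (1 : ZMod 1) n =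
      ArithmeticFunction.vonMangoldt n := by
    simp [ArithmeticFunction.vonMangoldt.residueClass, Subsingleton.elim (n : ZMod 1) 1]
  have hG := ArithmeticFunction.vonMangoldt.eqOn_LFunctionResidueClassAux (q := 1) isUnit_one
  simp only [hΛ, Nat.totient_one, Nat.cast_one, inv_one] at hG
  obtain ⟨δ, hδ, hsum⟩ := exists_pos_eventually_mul_le_sum_Ioc
    (fun n ↦ ArithmeticFunction.vonMangoldt_nonneg)
    (fun s hs ↦ ArithmeticFunction.LSeriesSummable_vonMangoldt hs) one_pos
    (ArithmeticFunction.vonMangoldt.continuousOn_LFunctionResidueClassAux 1)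
    (by simpa using hG) hc
  refine ⟨δ, hδ, ?_⟩
  filter_upwards [hsum, eventually_ge_atTop 0] with x hx hx0
  have hfloor : ⌊x⌋₊ ≤ ⌊c * x⌋₊ := Nat.floor_mono (le_mul_of_one_le_left hx0 hc.le)
  rwa [Chebyshev.psi, Chebyshev.psi, ← sum_Ioc_consecutive _ (Nat.zero_le _) hfloor,
    add_sub_cancel_left]

lemma exists_pos_eventually_mul_le_theta_sub (hc : 1 < c) :
    ∃ δ : ℝ, 0 < δ ∧ ∀ᶠ x in atTop, δ * x ≤ Chebyshev.theta (c * x) - Chebyshev.theta x := by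
  obtain ⟨δ, hδ, hpsi⟩ := exists_pos_eventually_mul_le_psi_sub hc
  obtain ⟨C, hC⟩ := Chebyshev.psi_sub_theta_le_mul_sqrt
  refine ⟨δ / 2, by positivity, ?_⟩
  have hsqrt : ∀ᶠ x : ℝ in atTop, C * √c ≤ δ / 2 * √x :=
    (Real.tendsto_sqrt_atTop.const_mul_atTop (by positivity)).eventually_ge_atTop _
  filter_upwards [hpsi, hsqrt, eventually_ge_atTop 0] with x hx hx_sqrt hx0
  have hdiff : Chebyshev.psi (c * x) - Chebyshev.theta (c * x) ≤ δ / 2 * x := by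
    calc Chebyshev.psi (c * x) - Chebyshev.theta (c * x) ≤ C * √(c * x) := hC _
      _ = C * √c * √x := by rw [Real.sqrt_mul (by linarith), mul_assoc]
      _ ≤ δ / 2 * √x * √x := by gcongr
      _ = δ / 2 * x := by rw [mul_assoc, Real.mul_self_sqrt hx0]
  linarith [Chebyshev.theta_le_psi x]

lemma primesUpTo_mono : Monotone primesUpTo := fun _ _ h ↦
  filter_subset_filter _ (range_mono (Nat.succ_le_succ (Nat.floor_mono h)))

lemma mem_primesUpTo_sdiff {x y : ℝ} (hx : 0 ≤ x) (hy : 0 ≤ y) {p : ℕ} :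
    p ∈ primesUpTo y \ primesUpTo x ↔ p.Prime ∧ x < p ∧ (p : ℝ) ≤ y := by
  simp only [primesUpTo, Finset.mem_sdiff, Finset.mem_filter, Finset.mem_range,
    Order.lt_add_one_iff, Nat.le_floor_iff hx, Nat.le_floor_iff hy]
  grind

lemma theta_sub_theta {x y : ℝ} (h : x ≤ y) :
    Chebyshev.theta y - Chebyshev.theta x = ∑ p ∈ primesUpTo y \ primesUpTo x, Real.log p := by
  have htheta (z : ℝ) : Chebyshev.theta z = ∑ p ∈ primesUpTo z, Real.log p := by
    rw [Chebyshev.theta_eq_sum_Icc, primesUpTo, range_eq_Ico]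
    rfl
  rw [htheta, htheta, sum_sdiff_eq_sub (primesUpTo_mono h)]

lemma exists_pos_eventually_mul_le_card_primesUpTo_sdiff (hc : 1 < c) :
    ∃ δ : ℝ, 0 < δ ∧ ∀ᶠ x in atTop,
      δ * (x / Real.log x) ≤ #(primesUpTo (c * x) \ primesUpTo x) := by
  obtain ⟨δ, hδ, htheta⟩ := exists_pos_eventually_mul_le_theta_sub hc
  refine ⟨δ / 2, by positivity, ?_⟩
  filter_upwards [htheta, eventually_gt_atTop 1, eventually_ge_atTop c] with x hx hx1 hxc
  have hx0 : 0 < x := one_pos.trans hx1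
  have hcx : x ≤ c * x := le_mul_of_one_le_left hx0.le hc.le
  have hlog_le : ∀ p ∈ primesUpTo (c * x) \ primesUpTo x, Real.log p ≤ 2 * Real.log x := by
    intro p hp
    obtain ⟨hp, -, hpx⟩ := (mem_primesUpTo_sdiff hx0.le (hx0.le.trans hcx)).1 hp
    calc Real.log p ≤ Real.log (x ^ 2) := Real.log_le_log (by exact_mod_cast hp.pos) (by nlinarith)
      _ = 2 * Real.log x := by simp
  rw [theta_sub_theta hcx] at hx
  have hsum := sum_le_card_nsmul _ _ _ hlog_le
  rw [nsmul_eq_mul] at hsum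
  rw [← mul_div_assoc, div_le_iff₀ (Real.log_pos hx1)]
  linarith

lemma tendsto_log_const_mul_div_log (hc : 0 < c) :
    Tendsto (fun x ↦ Real.log (c * x) / Real.log x) atTop (nhds 1) := by
  have hlim : Tendsto (fun x ↦ Real.log c / Real.log x + 1) atTop (nhds 1) := by
    simpa using (Real.tendsto_log_atTop.const_div_atTop (Real.log c)).add_const 1
  refine hlim.congr' ?_
  filter_upwards [eventually_gt_atTop 1] with x hx
  have hlog : Real.log x ≠ 0 := (Real.log_pos hx).ne'
  rw [Real.log_mul hc.ne' (by positivity), add_div, div_self hlog]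

lemma tendsto_log_const_mul_rpow_div_log_rpow (hc : 0 < c) (m : ℝ) :
    Tendsto (fun x ↦ Real.log (c * x) ^ m / Real.log x ^ m) atTop (nhds 1) := by
  have hlim := (tendsto_log_const_mul_div_log hc).rpow_const (p := m) (Or.inl one_ne_zero)
  rw [Real.one_rpow] at hlim
  have hcx : Tendsto (c * ·) atTop atTop := tendsto_id.const_mul_atTop hc
  refine hlim.congr' ?_
  filter_upwards [eventually_ge_atTop 1, hcx.eventually_ge_atTop 1] with x hx hx_c
  exact Real.div_rpow (Real.log_nonneg hx_c) (Real.log_nonneg hx) m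

lemma card_primesUpTo (x : ℝ) : #(primesUpTo x) = Nat.primeCounting ⌊x⌋₊ := by
  rw [Nat.primeCounting, Nat.primeCounting', Nat.count_eq_card_filter_range, primesUpTo]

lemma isBigO_card_primesUpTo :
    (fun x ↦ (#(primesUpTo x) : ℝ)) =O[atTop] fun x ↦ x / Real.log x := by
  refine IsBigO.of_bound (Real.log 4 + 1) ?_
  filter_upwards [Chebyshev.eventually_primeCounting_le one_pos, eventually_ge_atTop 1]
    with x hx hx1
  have hlog := Real.log_nonneg hx1
  rw [Real.norm_of_nonneg (by positivity), Real.norm_of_nonneg (by positivity), card_primesUpTo,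
    ← mul_div_assoc]
  exact hx

lemma isBigO_card_primesUpTo_const_mul (hc : 1 ≤ c) :
    (fun x ↦ (#(primesUpTo (c * x)) : ℝ)) =O[atTop] fun x ↦ x / Real.log x := by
  have hc0 : 0 < c := one_pos.trans_le hc
  refine (isBigO_card_primesUpTo.comp_tendsto (tendsto_id.const_mul_atTop hc0)).trans ?_
  refine IsBigO.of_bound c ?_
  filter_upwards [eventually_gt_atTop 1] with x hx
  have hlog := Real.log_pos hx
  have hle : Real.log x ≤ Real.log (c * x) :=
    Real.log_le_log (by positivity) (le_mul_of_one_le_left (by positivity) hc)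
  have hlog' := hlog.trans_le hle
  simp only [Function.comp_apply, id_eq]
  rw [Real.norm_of_nonneg (by positivity), Real.norm_of_nonneg (by positivity), ← mul_div_assoc]
  gcongr

lemma isLittleO_div_sub_const_mul {α : Type*} {l : Filter α} {S L P : α → ℝ} {κ : ℝ}
    (h : Tendsto (fun x ↦ S x / (L x * P x)) l (nhds κ)) (hP : ∀ x, P x = 0 → S x = 0) :
    (fun x ↦ S x / L x - κ * P x) =o[l] P := by
  have hsub : (fun x ↦ (S x / (L x * P x) - κ) * P x) =o[l] fun x ↦ 1 * P x :=
    ((isLittleO_one_iff ℝ).2 (tendsto_sub_nhds_zero_iff.2 h)).mul_isBigO (isBigO_refl P l)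
  refine (hsub.congr_right fun x ↦ one_mul _).congr_left fun x ↦ ?_
  rcases eq_or_ne (P x) 0 with hPx | hPx
  · simp [hPx, hP x hPx]
  · rw [sub_mul, ← div_div, div_mul_cancel₀ _ hPx]

lemma isLittleO_sum_primesUpTo_sdiff_div_sub {f : ℕ → ℝ} {L : ℝ → ℝ}
    (hL_pos : ∀ᶠ x in atTop, 0 < L x)
    (hL : Tendsto (fun x ↦ L (c * x) / L x) atTop (nhds 1)) {κ : ℝ}
    (hf : Tendsto (fun x ↦ (∑ p ∈ primesUpTo x, f p) / (L x * #(primesUpTo x))) atTop (nhds κ))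
    (hc : 1 ≤ c) :
    (fun x ↦ (∑ p ∈ primesUpTo (c * x) \ primesUpTo x, f p) / L x -
      κ * #(primesUpTo (c * x) \ primesUpTo x)) =o[atTop] fun x ↦ x / Real.log x := by
  have hcx : Tendsto (c * ·) atTop atTop := tendsto_id.const_mul_atTop (one_pos.trans_le hc)
  have hzero (x : ℝ) (hx : (#(primesUpTo x) : ℝ) = 0) : ∑ p ∈ primesUpTo x, f p = 0 := by
    rw [card_eq_zero.1 (Nat.cast_eq_zero.1 hx), sum_empty]
  have hf_c : Tendsto (fun x ↦ (∑ p ∈ primesUpTo (c * x), f p) / (L x * #(primesUpTo (c * x))))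
      atTop (nhds κ) := by
    refine mul_one κ ▸ ((hf.comp hcx).mul hL).congr' ?_
    filter_upwards [hcx.eventually hL_pos] with x hx
    simp only [Function.comp_apply]
    field_simp
  have hlower := (isLittleO_div_sub_const_mul hf hzero).trans_isBigO isBigO_card_primesUpTo
  have hupper := (isLittleO_div_sub_const_mul hf_c fun x ↦ hzero (c * x)).trans_isBigO
    (isBigO_card_primesUpTo_const_mul hc)
  refine (hupper.sub hlower).congr' ?_ EventuallyEq.rfl
  filter_upwards [eventually_ge_atTop 0] with x hx
  have hsub := primesUpTo_mono (le_mul_of_one_le_left hx hc)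
  rw [sum_sdiff_eq_sub hsub, cast_card_sdiff hsub]
  ring

lemma exists_pos_eventually_mul_le_sum_primesUpTo_sdiff {f : ℕ → ℝ} {L : ℝ → ℝ}
    (hL_pos : ∀ᶠ x in atTop, 0 < L x)
    (hL : Tendsto (fun x ↦ L (c * x) / L x) atTop (nhds 1)) {κ : ℝ} (hκ : 0 < κ)
    (hf : Tendsto (fun x ↦ (∑ p ∈ primesUpTo x, f p) / (L x * #(primesUpTo x))) atTop (nhds κ))
    (hc : 1 < c) :
    ∃ δ : ℝ, 0 < δ ∧ ∀ᶠ x in atTop,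
      δ * (L x * (x / Real.log x)) ≤ ∑ p ∈ primesUpTo (c * x) \ primesUpTo x, f p := by
  obtain ⟨δ, hδ, hcard⟩ := exists_pos_eventually_mul_le_card_primesUpTo_sdiff hc
  refine ⟨κ * δ / 2, by positivity, ?_⟩
  filter_upwards [hcard, (isLittleO_sum_primesUpTo_sdiff_div_sub hL_pos hL hf hc.le).bound
    (show 0 < κ * δ / 2 by positivity), hL_pos, eventually_gt_atTop 1] with x hx hx_err hx_L hx1
  have hlog := Real.log_pos hx1
  rw [Real.norm_of_nonneg (show 0 ≤ x / Real.log x by positivity)] at hx_err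
  rw [mul_left_comm, ← le_div_iff₀' hx_L]
  linarith [neg_le_of_abs_le hx_err, mul_le_mul_of_nonneg_left hx hκ.le]

lemma exists_pos_eventually_mul_log_rpow_le_sum_primesUpTo_sdiff {f : ℕ → ℝ} {m κ : ℝ}
    (hκ : 0 < κ) (hf : Tendsto (fun x ↦ (∑ p ∈ primesUpTo x, f p) /
      (Real.log x ^ m * #(primesUpTo x))) atTop (nhds κ)) (hc : 1 < c) :
    ∃ δ : ℝ, 0 < δ ∧ ∀ᶠ x in atTop,
      δ * Real.log x ^ (m - 1) * x ≤ ∑ p ∈ primesUpTo (c * x) \ primesUpTo x, f p := by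
  have hlog_pos : ∀ᶠ x in atTop, 0 < Real.log x := Real.tendsto_log_atTop.eventually_gt_atTop 0
  obtain ⟨δ, hδ, hsum⟩ := exists_pos_eventually_mul_le_sum_primesUpTo_sdiff
    (hlog_pos.mono fun x hx ↦ Real.rpow_pos_of_pos hx m)
    (tendsto_log_const_mul_rpow_div_log_rpow (one_pos.trans hc) m) hκ hf hc
  refine ⟨δ, hδ, ?_⟩
  filter_upwards [hsum, hlog_pos] with x hx hlog
  refine Eq.trans_le ?_ hx
  rw [Real.rpow_sub_one hlog.ne']
  ring

end PrimesInMultiplicativeWindows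

section LargeCoefficients

lemma sum_le_card_mul_add_card_filter_mul {ι : Type*} {T : Finset ι} {q : ι → Prop}
    [DecidablePred q] {f : ι → ℝ} {u v : ℝ} (hu : 0 ≤ u) (hf_u : ∀ i ∈ T, ¬q i → f i ≤ u)
    (hf_v : ∀ i ∈ T, q i → f i ≤ v) : ∑ i ∈ T, f i ≤ #T * u + #(T.filter q) * v := by
  have hsmall : ∑ i ∈ T with ¬q i, f i ≤ #T * u := by
    calc ∑ i ∈ T with ¬q i, f i ≤ #{i ∈ T | ¬q i} • u := sum_le_card_nsmul _ _ _ fun i hi ↦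
          hf_u i (Finset.mem_filter.1 hi).1 (Finset.mem_filter.1 hi).2
      _ ≤ #T * u := by
        rw [nsmul_eq_mul]
        gcongr
        exact filter_subset _ _
  have hlarge : ∑ i ∈ T with q i, f i ≤ #(T.filter q) * v := by
    rw [← nsmul_eq_mul]
    exact sum_le_card_nsmul _ _ _ fun i hi ↦
      hf_v i (Finset.mem_filter.1 hi).1 (Finset.mem_filter.1 hi).2
  rw [← sum_filter_not_add_sum_filter T q]
  exact add_le_add hsmall hlarge

lemma card_primesUpTo_le {x : ℝ} (hx : 0 ≤ x) : (#(primesUpTo x) : ℝ) ≤ x := by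
  have hsub : primesUpTo x ⊆ Ioc 0 ⌊x⌋₊ := fun p hp ↦ by
    rw [primesUpTo, Finset.mem_filter, Finset.mem_range, Order.lt_add_one_iff] at hp
    exact Finset.mem_Ioc.2 ⟨hp.2.pos, hp.1⟩
  have hcard : #(primesUpTo x) ≤ ⌊x⌋₊ := by simpa using card_le_card hsub
  exact (Nat.cast_le.2 hcard).trans (Nat.floor_le hx)

lemma eventually_rpow_neg_le_mul_log_rpow {s K : ℝ} (hs : 0 < s) (hK : 0 < K) (k : ℝ) :
    ∀ᶠ x in atTop, x ^ (-s) ≤ K * Real.log x ^ k := by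
  filter_upwards [(isLittleO_log_rpow_rpow_atTop (-k) hs).bound hK, eventually_gt_atTop 1]
    with x hx hx1
  have hlog := Real.log_pos hx1
  rw [Real.norm_of_nonneg (by positivity), Real.norm_of_nonneg (by positivity),
    Real.rpow_neg hlog.le, inv_le_iff_one_le_mul₀ (by positivity)] at hx
  rw [Real.rpow_neg (by linarith), inv_le_iff_one_le_mul₀ (by positivity)]
  linarith

lemma sum_norm_sq_primesUpTo_sdiff_le {E : Type*} [SeminormedAddGroup E] {b : ℕ → E}
    {c η θ C x : ℝ} [DecidablePred fun p : ℕ ↦ (p : ℝ) ^ (-η) < ‖b p‖] (hc : 0 ≤ c) (hη : 0 ≤ η)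
    (hθ : 0 ≤ θ) (hC : 0 ≤ C) (hb : ∀ p : ℕ, p.Prime → ‖b p‖ ≤ C * (p : ℝ) ^ θ) (hx : 0 < x) :
    ∑ p ∈ primesUpTo (c * x) \ primesUpTo x, ‖b p‖ ^ 2 ≤ c * x * (x ^ (-η)) ^ 2 +
      #((primesUpTo (c * x) \ primesUpTo x).filter fun p : ℕ ↦ (p : ℝ) ^ (-η) < ‖b p‖) *
        (C * (c * x) ^ θ) ^ 2 := by
  have hcx : 0 ≤ c * x := by positivity
  have hcard : (#(primesUpTo (c * x) \ primesUpTo x) : ℝ) ≤ c * x :=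
    (Nat.cast_le.2 (card_le_card sdiff_subset)).trans (card_primesUpTo_le hcx)
  refine (sum_le_card_mul_add_card_filter_mul (q := fun p : ℕ ↦ (p : ℝ) ^ (-η) < ‖b p‖)
    (sq_nonneg (x ^ (-η))) (fun p hp hbp ↦ ?_) fun p hp _ ↦ ?_).trans
    (add_le_add (mul_le_mul_of_nonneg_right hcard (sq_nonneg _)) le_rfl)
  all_goals obtain ⟨hp_prime, hxp, hpx⟩ := (mem_primesUpTo_sdiff hx.le hcx).1 hp
  · gcongr
    exact (not_lt.1 hbp).trans (Real.rpow_le_rpow_of_nonpos hx hxp.le (neg_nonpos.2 hη))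
  · gcongr
    exact (hb p hp_prime).trans (by gcongr)

lemma filter_range_eq_filter_primesUpTo_sdiff {x y : ℝ} (hx : 0 ≤ x) (hy : 0 ≤ y) (q : ℕ → Prop)
    [DecidablePred q] [DecidablePred fun p : ℕ ↦ p.Prime ∧ x < p ∧ (p : ℝ) ≤ y ∧ q p] :
    (range (⌊y⌋₊ + 1)).filter (fun p : ℕ ↦ p.Prime ∧ x < p ∧ (p : ℝ) ≤ y ∧ q p) =
      (primesUpTo y \ primesUpTo x).filter q := by
  ext p
  rw [Finset.mem_filter, Finset.mem_filter, mem_primesUpTo_sdiff hx hy, Finset.mem_range,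
    Order.lt_add_one_iff, Nat.le_floor_iff hy]
  tauto

open scoped Classical in
lemma eventually_mul_log_rpow_le_card_filter_mul {E : Type*} [SeminormedAddGroup E] {b : ℕ → E}
    {c η θ C δ k : ℝ} (hc : 0 < c) (hη : 0 < η) (hθ : 0 ≤ θ) (hC : 0 ≤ C)
    (hb : ∀ p : ℕ, p.Prime → ‖b p‖ ≤ C * (p : ℝ) ^ θ) (hδ : 0 < δ)
    (hsum : ∀ᶠ x in atTop,
      δ * Real.log x ^ k * x ≤ ∑ p ∈ primesUpTo (c * x) \ primesUpTo x, ‖b p‖ ^ 2) :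
    ∀ᶠ x in atTop, δ / 2 * Real.log x ^ k * x ≤
      #((primesUpTo (c * x) \ primesUpTo x).filter fun p : ℕ ↦ (p : ℝ) ^ (-η) < ‖b p‖) *
        (C * (c * x) ^ θ) ^ 2 := by
  filter_upwards [hsum, eventually_gt_atTop 0,
    eventually_rpow_neg_le_mul_log_rpow (s := η * 2) (K := δ / (2 * c)) (by positivity)
      (by positivity) k] with x hx_sum hx hx_small
  have hsmall : c * x * (x ^ (-η)) ^ 2 ≤ δ / 2 * Real.log x ^ k * x := by
    calc c * x * (x ^ (-η)) ^ 2 = c * x * x ^ (-(η * 2)) := by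
          rw [← Real.rpow_mul_natCast hx.le, Nat.cast_two, neg_mul]
      _ ≤ c * x * (δ / (2 * c) * Real.log x ^ k) := by gcongr
      _ = δ / 2 * Real.log x ^ k * x := by field_simp
  linarith [sum_norm_sq_primesUpTo_sdiff_le hc.le hη.le hθ hC hb hx]

end LargeCoefficients

open scoped Classical in
theorem statement_5_general {E : Type*} [SeminormedAddGroup E] (b : ℕ → E) (m κ : ℝ) (hκ : 0 < κ)
    {θ C : ℝ} (hθ : 0 ≤ θ) (hC : 0 < C) (hb : ∀ p : ℕ, p.Prime → ‖b p‖ ≤ C * (p : ℝ) ^ θ)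
    (hSel : Tendsto (fun x : ℝ =>
        (∑ p ∈ primesUpTo x, ‖b p‖ ^ 2) / (Real.log x ^ m * ((primesUpTo x).card : ℝ)))
      atTop (nhds κ))
    {c : ℝ} (hc : 1 < c) {η : ℝ} (hη : 0 < η) {ε : ℝ} (hε : 2 * θ < ε) :
    ∃ A : ℝ, 0 < A ∧ ∃ x₀ : ℝ, ∀ x : ℝ, x₀ ≤ x →
      A * x ^ (1 - ε) ≤
        (((Finset.range (⌊c * x⌋₊ + 1)).filter fun p =>
            Nat.Prime p ∧ x < (p : ℝ) ∧ (p : ℝ) ≤ c * x ∧ (p : ℝ) ^ (-η) < ‖b p‖).card : ℝ) := by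
  have hc0 : 0 < c := one_pos.trans hc
  obtain ⟨δ, hδ, hsum⟩ := exists_pos_eventually_mul_log_rpow_le_sum_primesUpTo_sdiff hκ hSel hc
  have hK : 0 < (C * c ^ θ) ^ 2 := by positivity
  refine ⟨δ / 2 / (C * c ^ θ) ^ 2, by positivity, eventually_atTop.1 ?_⟩
  filter_upwards [eventually_mul_log_rpow_le_card_filter_mul hc0 hη hθ hC.le hb hδ hsum,
    eventually_gt_atTop 0,
    eventually_rpow_neg_le_mul_log_rpow (sub_pos.2 hε) one_pos (m - 1)] with x hcard hx hlog
  have hx_rpow : 0 < x ^ (2 * θ) := Real.rpow_pos_of_pos hx _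
  rw [filter_range_eq_filter_primesUpTo_sdiff hx.le (by positivity), div_mul_eq_mul_div,
    div_le_iff₀ hK, ← mul_le_mul_iff_left₀ hx_rpow]
  calc δ / 2 * x ^ (1 - ε) * x ^ (2 * θ) = δ / 2 * x ^ (-(ε - 2 * θ)) * x := by
        rw [mul_assoc, mul_assoc, ← Real.rpow_add hx, ← Real.rpow_add_one hx.ne']
        ring_nf
    _ ≤ δ / 2 * Real.log x ^ (m - 1) * x := by
        gcongr
        rwa [one_mul] at hlog
    _ ≤ _ := hcard
    _ = _ := by
        rw [Real.mul_rpow hc0.le hx.le, mul_comm 2 θ, Real.rpow_mul hx.le, Real.rpow_two]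
        ring

open scoped Classical in
/-- If `b(p) ≪ p^ε` for every `ε > 0` and
`(1/((log x)^m π(x))) ∑_{p≤x} |b(p)|² → κ > 0`, then for every `c > 1`, `η > 0`, `ε > 0`
the number of primes `p` with `x < p ≤ cx` and `|b(p)| > p^{-η}` is `≫ x^{1-ε}`. -/
theorem statement_5 (b : ℕ → ℂ) (m : ℕ) (κ : ℝ) (hκ : 0 < κ)
    (hb : ∀ ε : ℝ, 0 < ε → ∃ C : ℝ, 0 < C ∧ ∀ p : ℕ, p.Prime → ‖b p‖ ≤ C * (p : ℝ) ^ ε)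
    (hSel : Tendsto (fun x : ℝ =>
        (∑ p ∈ primesUpTo x, ‖b p‖ ^ 2) / ((Real.log x) ^ m * ((primesUpTo x).card : ℝ)))
      atTop (nhds κ)) :
    ∀ c : ℝ, 1 < c → ∀ η : ℝ, 0 < η → ∀ ε : ℝ, 0 < ε →
      ∃ A : ℝ, 0 < A ∧ ∃ x₀ : ℝ, ∀ x : ℝ, x₀ ≤ x →
        A * x ^ (1 - ε) ≤
          (((Finset.range (⌊c * x⌋₊ + 1)).filter fun p =>
              Nat.Prime p ∧ x < (p : ℝ) ∧ (p : ℝ) ≤ c * x ∧ (p : ℝ) ^ (-η) < ‖b p‖).card : ℝ) := by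
  intro c hc η hη ε hε
  obtain ⟨C, hC, hbC⟩ := hb (ε / 4) (by positivity)
  exact statement_5_general b m κ hκ (by positivity) hC hbC
    (by simpa only [Real.rpow_natCast] using hSel) hc hη (by linarith)
end

section
/- Let L be a function of class S_A. Then for every δ > 0 there exists a real number θ ≠ 0 such that the function s ↦ L(s) + L(s + iθ) does not vanish at any point s with Re(s) ≥ 1 + δ. -/
open Complex Filter Finset

/-- `L` belongs to the class `S_A`, with Dirichlet coefficients `a n` and
Euler-product coefficients `b p k` (the coefficient of `p^{-ks}`): for `Re s > 1`,
`L s = ∑_{n ≥ 1} a n / n^s = ∏_p exp (∑_{k ≥ 1} b p k / p^{k s})`, both converging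
absolutely, with `a n ≪ n^ε` for all `ε > 0`, `‖b p k‖ ≤ C p^{kθ}` for some `θ < 1/2`,
and `a p = b p 1` for every prime `p`. -/
structure IsSA (L : ℂ → ℂ) (a : ℕ → ℂ) (b : ℕ → ℕ → ℂ) : Prop where
  dirichlet_abs : ∀ s : ℂ, 1 < s.re →
    Summable fun n : ℕ => ‖a (n + 1) / ((n : ℂ) + 1) ^ s‖
  dirichlet : ∀ s : ℂ, 1 < s.re →
    HasSum (fun n : ℕ => a (n + 1) / ((n : ℂ) + 1) ^ s) (L s)
  euler_abs : ∀ s : ℂ, 1 < s.re →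
    Summable fun pk : Nat.Primes × ℕ =>
      ‖b (pk.1 : ℕ) (pk.2 + 1) / ((pk.1 : ℕ) : ℂ) ^ (((pk.2 : ℂ) + 1) * s)‖
  euler : ∀ s : ℂ, 1 < s.re →
    HasProd (fun p : Nat.Primes =>
      Complex.exp (∑' k : ℕ, b (p : ℕ) (k + 1) / ((p : ℕ) : ℂ) ^ (((k : ℂ) + 1) * s))) (L s)
  a_growth : ∀ ε : ℝ, 0 < ε → ∃ C : ℝ, 0 < C ∧ ∀ n : ℕ, 1 ≤ n → ‖a n‖ ≤ C * (n : ℝ) ^ ε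
  b_bound : ∃ C : ℝ, 0 < C ∧ ∃ θ : ℝ, θ < 1 / 2 ∧
    ∀ p : ℕ, p.Prime → ∀ k : ℕ, 1 ≤ k → ‖b p k‖ ≤ C * (p : ℝ) ^ ((k : ℝ) * θ)
  ap_eq_bp : ∀ p : ℕ, p.Prime → a p = b p 1

/-- The Selberg-type normality condition `(1/π(x)) ∑_{p ≤ x} ‖a p‖² → κ` as `x → ∞`. -/
def SelbergCond (a : ℕ → ℂ) (κ : ℝ) : Prop :=
  Tendsto (fun x : ℝ => (∑ p ∈ primesUpTo x, ‖a p‖ ^ 2) / ((primesUpTo x).card : ℝ))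
    atTop (nhds κ)

/-- The set `S` contains at least `x` elements. -/
def AtLeastCard (S : Set ℂ) (x : ℝ) : Prop :=
  ∃ F : Finset ℂ, ↑F ⊆ S ∧ x ≤ (F.card : ℝ)

/-!
Where its Euler product converges absolutely, `L = exp D` for a general Dirichlet series
`D(s) = ∑ c_j e^{-ν_j s}` with frequencies `ν_j ≥ 0`. Thus `L(s) + L(s + iθ) = 0` would make
`D(s + iθ) - D(s)` an odd multiple of `πi`, of modulus at least `π`. But the `j`-th term of this
difference is `c_j e^{-ν_j s} (e^{-iν_jθ} - 1)`, whose modulus on `Re s ≥ σ` is largest at `s = σ`,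
so dominated convergence at the single point `σ` shows that the difference tends to `0` as `θ → 0`,
uniformly on the half-plane.
-/

open scoped Topology

/-- The term `c i * e^{-ν i s}` of the general Dirichlet series with coefficients `c` and
frequencies `ν`. Unlike for `LSeries`, the index type is arbitrary, so that the logarithm of an
Euler product can be summed directly over pairs of a prime and an exponent. -/
noncomputable def generalDirichletTerm {ι : Type*} (c : ι → ℂ) (ν : ι → ℝ) (s : ℂ) (i : ι) : ℂ :=
  c i * exp (-ν i * s)

/-- The general Dirichlet series `∑ i, c i * e^{-ν i s}`; its value is `0` where the series is not
summable. -/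
noncomputable def generalDirichletSeries {ι : Type*} (c : ι → ℂ) (ν : ι → ℝ) (s : ℂ) : ℂ :=
  ∑' i, generalDirichletTerm c ν s i

section GeneralDirichletSeries

variable {ι : Type*} {c : ι → ℂ} {ν : ι → ℝ} {s w : ℂ}

lemma norm_generalDirichletTerm (c : ι → ℂ) (ν : ι → ℝ) (s : ℂ) (i : ι) :
    ‖generalDirichletTerm c ν s i‖ = ‖c i‖ * Real.exp (-ν i * s.re) := by
  simp [generalDirichletTerm, norm_exp]

lemma norm_generalDirichletTerm_le_of_re_le {i : ι} (hν : 0 ≤ ν i) (hws : w.re ≤ s.re) :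
    ‖generalDirichletTerm c ν s i‖ ≤ ‖generalDirichletTerm c ν w i‖ := by
  simp only [norm_generalDirichletTerm, neg_mul]
  gcongr

lemma summable_generalDirichletTerm_of_re_le (hν : ∀ i, 0 ≤ ν i)
    (hw : Summable fun i => ‖generalDirichletTerm c ν w i‖) (hws : w.re ≤ s.re) :
    Summable (generalDirichletTerm c ν s) :=
  hw.of_norm_bounded fun i => norm_generalDirichletTerm_le_of_re_le (hν i) hws

lemma generalDirichletTerm_add (c : ι → ℂ) (ν : ι → ℝ) (s z : ℂ) (i : ι) :
    generalDirichletTerm c ν (s + z) i = generalDirichletTerm c ν s i * exp (-ν i * z) := by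
  rw [generalDirichletTerm, generalDirichletTerm, mul_assoc, ← exp_add, mul_add]

lemma norm_generalDirichletTerm_add_sub_le_of_re_le {i : ι} (hν : 0 ≤ ν i) (hws : w.re ≤ s.re)
    (z : ℂ) :
    ‖generalDirichletTerm c ν (s + z) i - generalDirichletTerm c ν s i‖ ≤
      ‖generalDirichletTerm c ν (w + z) i - generalDirichletTerm c ν w i‖ := by
  simp only [generalDirichletTerm_add, ← mul_sub_one, norm_mul]
  gcongr ?_ * _
  exact norm_generalDirichletTerm_le_of_re_le hν hws

lemma norm_generalDirichletTerm_add_mul_I (c : ι → ℂ) (ν : ι → ℝ) (s : ℂ) (θ : ℝ) (i : ι) :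
    ‖generalDirichletTerm c ν (s + θ * I) i‖ = ‖generalDirichletTerm c ν s i‖ := by
  simp [norm_generalDirichletTerm]

lemma norm_generalDirichletTerm_add_mul_I_sub_le (c : ι → ℂ) (ν : ι → ℝ) (s : ℂ) (θ : ℝ) (i : ι) :
    ‖generalDirichletTerm c ν (s + θ * I) i - generalDirichletTerm c ν s i‖ ≤
      2 * ‖generalDirichletTerm c ν s i‖ :=
  (norm_sub_le _ _).trans_eq (by rw [norm_generalDirichletTerm_add_mul_I, two_mul])

lemma tendsto_generalDirichletTerm_add_mul_I (c : ι → ℂ) (ν : ι → ℝ) (s : ℂ) (i : ι) :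
    Tendsto (fun θ : ℝ => generalDirichletTerm c ν (s + θ * I) i) (𝓝 0)
      (𝓝 (generalDirichletTerm c ν s i)) := by
  have hcont : Continuous fun θ : ℝ => generalDirichletTerm c ν (s + θ * I) i := by
    unfold generalDirichletTerm
    fun_prop
  simpa using hcont.tendsto 0

lemma tendsto_tsum_norm_generalDirichletTerm_add_mul_I_sub
    (hs : Summable fun i => ‖generalDirichletTerm c ν s i‖) :
    Tendsto (fun θ : ℝ => ∑' i, ‖generalDirichletTerm c ν (s + θ * I) i -
      generalDirichletTerm c ν s i‖) (𝓝 0) (𝓝 0) := by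
  have hterm (i : ι) : Tendsto (fun θ : ℝ => ‖generalDirichletTerm c ν (s + θ * I) i -
      generalDirichletTerm c ν s i‖) (𝓝 0) (𝓝 0) :=
    tendsto_iff_norm_sub_tendsto_zero.mp (tendsto_generalDirichletTerm_add_mul_I c ν s i)
  have hbound (θ : ℝ) (i : ι) : ‖‖generalDirichletTerm c ν (s + θ * I) i -
      generalDirichletTerm c ν s i‖‖ ≤ 2 * ‖generalDirichletTerm c ν s i‖ := by
    rw [norm_norm]
    exact norm_generalDirichletTerm_add_mul_I_sub_le c ν s θ i
  simpa only [tsum_zero] using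
    tendsto_tsum_of_dominated_convergence (hs.mul_left 2) hterm (Eventually.of_forall hbound)

lemma norm_generalDirichletSeries_add_mul_I_sub_le (hν : ∀ i, 0 ≤ ν i)
    (hw : Summable fun i => ‖generalDirichletTerm c ν w i‖) (hws : w.re ≤ s.re) (θ : ℝ) :
    ‖generalDirichletSeries c ν (s + θ * I) - generalDirichletSeries c ν s‖ ≤
      ∑' i, ‖generalDirichletTerm c ν (w + θ * I) i - generalDirichletTerm c ν w i‖ := by
  have hsum := summable_generalDirichletTerm_of_re_le hν hw hws
  have hsum_shift : Summable (generalDirichletTerm c ν (s + θ * I)) :=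
    summable_generalDirichletTerm_of_re_le hν hw (by simpa using hws)
  have hmajorant : Summable fun i =>
      ‖generalDirichletTerm c ν (w + θ * I) i - generalDirichletTerm c ν w i‖ :=
    (hw.mul_left 2).of_nonneg_of_le (fun _ => norm_nonneg _)
      (norm_generalDirichletTerm_add_mul_I_sub_le c ν w θ)
  rw [generalDirichletSeries, generalDirichletSeries, ← hsum_shift.tsum_sub hsum]
  exact tsum_of_norm_bounded hmajorant.hasSum fun i =>
    norm_generalDirichletTerm_add_sub_le_of_re_le (hν i) hws _

theorem tendstoUniformlyOn_generalDirichletSeries_add_mul_I (hν : ∀ i, 0 ≤ ν i)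
    (hw : Summable fun i => ‖generalDirichletTerm c ν w i‖) :
    TendstoUniformlyOn (fun (θ : ℝ) s => generalDirichletSeries c ν (s + θ * I))
      (generalDirichletSeries c ν) (𝓝 0) {s | w.re ≤ s.re} := by
  rw [Metric.tendstoUniformlyOn_iff]
  intro ε hε
  filter_upwards [(tendsto_tsum_norm_generalDirichletTerm_add_mul_I_sub hw).eventually_lt_const hε]
    with θ hθ s hs
  rw [dist_comm, dist_eq_norm]
  exact (norm_generalDirichletSeries_add_mul_I_sub_le hν hw hs θ).trans_lt hθ

end GeneralDirichletSeries

lemma exp_ne_neg_one_of_norm_lt_pi {z : ℂ} (hz : ‖z‖ < Real.pi) : exp z ≠ -1 := by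
  intro h
  have him : |z.im| < Real.pi := (abs_im_le_norm z).trans_lt hz
  have hzpi : z = Real.pi * I := by
    rw [← log_neg_one, ← h, log_exp (abs_lt.mp him).1 (abs_lt.mp him).2.le]
  simp [hzpi, abs_of_pos Real.pi_pos] at hz

lemma exp_add_exp_ne_zero_of_norm_sub_lt_pi {z w : ℂ} (h : ‖w - z‖ < Real.pi) :
    exp z + exp w ≠ 0 := by
  intro hzero
  refine exp_ne_neg_one_of_norm_lt_pi h ?_
  rw [exp_sub, div_eq_iff (exp_ne_zero z)]
  linear_combination hzero

lemma eventually_exp_add_exp_ne_zero_of_tendstoUniformlyOn {α κ : Type*} {F : κ → α → ℂ}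
    {f : α → ℂ} {l : Filter κ} {S : Set α} (h : TendstoUniformlyOn F f l S) :
    ∀ᶠ n in l, ∀ x ∈ S, exp (f x) + exp (F n x) ≠ 0 := by
  filter_upwards [Metric.tendstoUniformlyOn_iff.mp h Real.pi Real.pi_pos] with n hn x hx
  apply exp_add_exp_ne_zero_of_norm_sub_lt_pi
  rw [← dist_eq_norm, dist_comm]
  exact hn x hx

/-- The coefficients `b(p^{k+1})` of the logarithm of an Euler product, indexed by `(p, k)`; as in
`IsSA`, the second index is the exponent minus one. -/
def eulerLogCoeff (b : ℕ → ℕ → ℂ) (pk : Nat.Primes × ℕ) : ℂ :=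
  b pk.1 (pk.2 + 1)

/-- The frequency `log (p^{k+1})` of the pair `(p, k)`, for which `e^{-ν s} = p^{-(k+1)s}`. -/
noncomputable def primePowerFreq (pk : Nat.Primes × ℕ) : ℝ :=
  (pk.2 + 1) * Real.log pk.1

lemma primePowerFreq_nonneg (pk : Nat.Primes × ℕ) : 0 ≤ primePowerFreq pk :=
  mul_nonneg (by positivity) (Real.log_natCast_nonneg _)

lemma generalDirichletTerm_eulerLogCoeff (b : ℕ → ℕ → ℂ) (s : ℂ) (pk : Nat.Primes × ℕ) :
    generalDirichletTerm (eulerLogCoeff b) primePowerFreq s pk =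
      b pk.1 (pk.2 + 1) / ((pk.1 : ℕ) : ℂ) ^ (((pk.2 : ℂ) + 1) * s) := by
  have hp : ((pk.1 : ℕ) : ℂ) ≠ 0 := Nat.cast_ne_zero.mpr pk.1.prop.ne_zero
  rw [generalDirichletTerm, eulerLogCoeff, primePowerFreq, div_eq_mul_inv, ← cpow_neg,
    cpow_def_of_ne_zero hp, ← natCast_log]
  push_cast
  ring_nf

lemma eq_exp_generalDirichletSeries_of_hasProd {b : ℕ → ℕ → ℂ} {s l : ℂ}
    (hsum : Summable (generalDirichletTerm (eulerLogCoeff b) primePowerFreq s))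
    (hprod : HasProd (fun p : Nat.Primes =>
      exp (∑' k : ℕ, b p (k + 1) / ((p : ℕ) : ℂ) ^ (((k : ℂ) + 1) * s))) l) :
    l = exp (generalDirichletSeries (eulerLogCoeff b) primePowerFreq s) := by
  have hlog : HasSum (fun p : Nat.Primes =>
      ∑' k : ℕ, b p (k + 1) / ((p : ℕ) : ℂ) ^ (((k : ℂ) + 1) * s))
      (generalDirichletSeries (eulerLogCoeff b) primePowerFreq s) := by
    simpa only [generalDirichletSeries, generalDirichletTerm_eulerLogCoeff] using
      hsum.hasSum.prod_fiberwise fun p => (hsum.prod_factor p).hasSum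
  exact hprod.unique hlog.cexp

theorem statement_9_general {L : ℂ → ℂ} {b : ℕ → ℕ → ℂ} {σ : ℝ}
    (habs : Summable fun pk : Nat.Primes × ℕ =>
      ‖b (pk.1 : ℕ) (pk.2 + 1) / ((pk.1 : ℕ) : ℂ) ^ (((pk.2 : ℂ) + 1) * σ)‖)
    (heuler : ∀ s : ℂ, σ ≤ s.re → HasProd (fun p : Nat.Primes =>
      exp (∑' k : ℕ, b (p : ℕ) (k + 1) / ((p : ℕ) : ℂ) ^ (((k : ℂ) + 1) * s))) (L s)) :
    ∀ᶠ θ : ℝ in 𝓝 0, ∀ s : ℂ, σ ≤ s.re → L s + L (s + θ * I) ≠ 0 := by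
  simp only [← generalDirichletTerm_eulerLogCoeff b] at habs
  have hL (s : ℂ) (hs : σ ≤ s.re) :
      L s = exp (generalDirichletSeries (eulerLogCoeff b) primePowerFreq s) :=
    eq_exp_generalDirichletSeries_of_hasProd
      (summable_generalDirichletTerm_of_re_le primePowerFreq_nonneg habs hs) (heuler s hs)
  filter_upwards [eventually_exp_add_exp_ne_zero_of_tendstoUniformlyOn
    (tendstoUniformlyOn_generalDirichletSeries_add_mul_I primePowerFreq_nonneg habs)] with θ hθ s hs
  rw [hL s hs, hL (s + θ * I) (by simpa using hs)]
  exact hθ s hs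

/-- For `L ∈ S_A` and every `δ > 0` there is a real `θ ≠ 0` such that
`s ↦ L(s) + L(s + iθ)` does not vanish on `Re s ≥ 1 + δ`. -/
theorem statement_9 (L : ℂ → ℂ) (a : ℕ → ℂ) (b : ℕ → ℕ → ℂ) (hL : IsSA L a b)
    (δ : ℝ) (hδ : 0 < δ) :
    ∃ θ : ℝ, θ ≠ 0 ∧ ∀ s : ℂ, 1 + δ ≤ s.re → L s + L (s + θ * Complex.I) ≠ 0 := by
  have hev := statement_9_general (hL.euler_abs (1 + δ : ℝ) (by simpa using hδ))
    fun s hs => hL.euler s (by linarith)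
  exact ((eventually_mem_nhdsWithin (s := {0}ᶜ)).and (hev.filter_mono nhdsWithin_le_nhds)).exists
end

section
/- For every δ > 0 there exist c > 0 and T₀ > 0 such that for all T ≥ T₀, the set {s ∈ ℂ : 1 < Re(s) < 1 + δ, Im(s) ∈ [0,T], ζ(s)² − ζ(2s) = 0} contains at least cT elements; in particular the Euler–Zagier double zeta value ζ₂(s,s) = (ζ(s)² − ζ(2s))/2 has infinitely many zeros in the half-plane Re(s) > 1. -/
open Complex Filter

/-!
Write `ζ(s)² - ζ(2s) = ∑ C(n) n⁻ˢ`. Twisting `C` by a completely multiplicative `χ` with values on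
the unit circle turns the sum into `L(χ, s)² - L(χ², 2s)`, and by the Euler products
`L(χ, s)² / L(χ², 2s) = ∏ₚ (1 + χ(p) p⁻ˢ) / (1 - χ(p) p⁻ˢ)`. When `χ(p) = i` for all `p` and
`s = σ > 1` is real, the product is `exp(iΘ(σ))` with `Θ(σ) = ∑ₚ 2 arctan(p^(-σ))`, which is
continuous and tends to `∞` as `σ → 1⁺` because `∑ₚ 1/p` diverges. Hence the twisted series has
zeros arbitrarily close to `1`. As the numbers `log p` are linearly independent, Kronecker's theorem
gives a relatively dense set of `τ` for which the vertical translate by `τ` of the original series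
is uniformly close to the twisted one, and by Hurwitz's argument each such translate has a zero
near `σ`.
-/

section

open MeasureTheory Metric Set Topology

/-! ### Relatively dense sets -/

/-- A set of reals that meets every interval of some fixed length; the intervals are taken closed,
which does not affect the notion. -/
def IsRelativelyDense (A : Set ℝ) : Prop :=
  ∃ L : ℝ, ∀ a : ℝ, ∃ t ∈ A, t ∈ Icc a (a + L)

namespace IsRelativelyDense

variable {A B : Set ℝ}

theorem of_forall_exists_dist_le (hA : IsRelativelyDense A) {r : ℝ}
    (h : ∀ t ∈ A, ∃ u ∈ B, dist u t ≤ r) : IsRelativelyDense B := by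
  obtain ⟨L, hL⟩ := hA
  refine ⟨L + 2 * r, fun a => ?_⟩
  obtain ⟨t, htA, hat, hta⟩ := hL (a + r)
  obtain ⟨u, huB, hut⟩ := h t htA
  rw [Real.dist_eq, abs_le] at hut
  exact ⟨u, huB, by linarith, by linarith⟩

theorem mono (hA : IsRelativelyDense A) (hAB : A ⊆ B) : IsRelativelyDense B :=
  hA.imp fun _ hL a => (hL a).imp fun _ ht => ⟨hAB ht.1, ht.2⟩

theorem infinite (hA : IsRelativelyDense A) : A.Infinite := by
  obtain ⟨L, hL⟩ := hA
  refine infinite_of_not_bddAbove fun ⟨b, hb⟩ => ?_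
  obtain ⟨t, htA, hbt, -⟩ := hL (b + 1)
  linarith [hb htA]

theorem exists_finset_subset_Icc (hA : IsRelativelyDense A) :
    ∃ c : ℝ, 0 < c ∧ ∃ T₀ : ℝ, 0 < T₀ ∧ ∀ T : ℝ, T₀ ≤ T →
      ∃ F : Finset ℝ, ↑F ⊆ A ∩ Icc 0 T ∧ c * T ≤ F.card := by
  obtain ⟨L, hL⟩ := hA
  have hL0 : 0 ≤ L := by
    obtain ⟨t, -, ht⟩ := hL 0
    linarith [ht.1.trans ht.2]
  set H := L + 1
  choose t htA ht using fun k : ℕ => hL (k * H)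
  have ht_mono : StrictMono t := strictMono_nat_of_lt_succ fun k => by
    have := (ht (k + 1)).1
    push_cast at this
    linarith [(ht k).2]
  refine ⟨1 / (2 * H), by positivity, 2 * H, by positivity, fun T hT => ?_⟩
  have hTH : 2 ≤ T / H := by rwa [le_div_iff₀ (by positivity)]
  refine ⟨(Finset.range ⌊T / H⌋₊).image t, fun u hu => ?_, ?_⟩
  · obtain ⟨k, hk, rfl⟩ := Finset.mem_image.mp (Finset.mem_coe.mp hu)
    have hkT : ((k : ℝ) + 1) * H ≤ T := by
      rw [← le_div_iff₀ (by positivity)]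
      exact le_trans (by exact_mod_cast Finset.mem_range.mp hk) (Nat.floor_le (by linarith))
    exact ⟨htA k, le_trans (by positivity) (ht k).1, by linarith [(ht k).2]⟩
  · rw [Finset.card_image_of_injective _ ht_mono.injective, Finset.card_range]
    calc 1 / (2 * H) * T = T / H - T / H / 2 := by field_simp; ring
      _ ≤ T / H - 1 := by linarith
      _ ≤ ⌊T / H⌋₊ := by linarith [Nat.lt_floor_add_one (T / H)]

theorem atLeastCard_of_im_image {S : Set ℂ} (hS : IsRelativelyDense (im '' S)) :
    ∃ c : ℝ, 0 < c ∧ ∃ T₀ : ℝ, 0 < T₀ ∧ ∀ T : ℝ, T₀ ≤ T →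
      AtLeastCard {s ∈ S | s.im ∈ Icc 0 T} (c * T) := by
  obtain ⟨c, hc, T₀, hT₀, h⟩ := hS.exists_finset_subset_Icc
  refine ⟨c, hc, T₀, hT₀, fun T hT => ?_⟩
  obtain ⟨F, hF, hcard⟩ := h T hT
  rw [← image_inter_preimage, Finset.subset_set_image_iff] at hF
  obtain ⟨G, hG, rfl⟩ := hF
  exact ⟨G, hG, hcard.trans (by exact_mod_cast Finset.card_image_le)⟩

end IsRelativelyDense

/-! ### Kronecker's theorem -/

/-- The linear flow with frequencies `lam` on the torus `ℝ^ι / ℤ^ι`, started at the origin. -/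
def linearFlow {ι : Type*} (lam : ι → ℝ) (t : ℝ) : UnitAddTorus ι :=
  fun i => (lam i * t : ℝ)

section linearFlow

variable {ι : Type*}

theorem continuous_linearFlow (lam : ι → ℝ) : Continuous (linearFlow lam) :=
  continuous_pi fun _ => (AddCircle.continuous_mk' 1).comp (continuous_const.mul continuous_id)

theorem intervalIntegrable_comp_linearFlow (f : C(UnitAddTorus ι, ℂ)) (lam : ι → ℝ) (a b : ℝ) :
    IntervalIntegrable (fun t => f (linearFlow lam t)) volume a b :=
  (f.continuous.comp (continuous_linearFlow lam)).intervalIntegrable a b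

variable [Fintype ι]

theorem measureReal_univ_unitAddTorus : (volume : Measure (UnitAddTorus ι)).real univ = 1 := by
  simp [Measure.real, volume_pi, Measure.pi_univ]

theorem mFourier_linearFlow (n : ι → ℤ) (lam : ι → ℝ) (t : ℝ) :
    UnitAddTorus.mFourier n (linearFlow lam t) =
      exp ((2 * Real.pi * (∑ i, n i * lam i : ℝ) * I : ℂ) * t) := by
  simp only [UnitAddTorus.mFourier, ContinuousMap.coe_mk, linearFlow, fourier_coe_apply, ← exp_sum]
  congr 1
  push_cast
  simp only [Finset.mul_sum, Finset.sum_mul]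
  exact Finset.sum_congr rfl fun i _ => by ring

theorem integral_mFourier_eq_zero {n : ι → ℤ} (hn : n ≠ 0) :
    ∫ x : UnitAddTorus ι, UnitAddTorus.mFourier n x = 0 := by
  rw [UnitAddTorus.mFourier, ContinuousMap.coe_mk, integral_fintype_prod_volume_eq_prod]
  obtain ⟨i, hi⟩ := Function.ne_iff.mp hn
  exact Finset.prod_eq_zero (Finset.mem_univ i)
    (integral_eq_zero_of_add_right_eq_neg (fourier_add_half_inv_index hi one_pos))

theorem norm_integral_exp_mul_le {c : ℂ} (hc : c ≠ 0) (hre : c.re = 0) (a b : ℝ) :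
    ‖∫ t in a..b, exp (c * t)‖ ≤ 2 / ‖c‖ := by
  have hexp (t : ℝ) : ‖exp (c * t)‖ = 1 := by simp [norm_exp, hre]
  rw [integral_exp_mul_complex hc, norm_div]
  gcongr
  exact (norm_sub_le _ _).trans (by rw [hexp, hexp]; norm_num)

variable {lam : ι → ℝ}

theorem exists_norm_integral_mFourier_linearFlow_sub_le (hlam : LinearIndependent ℤ lam)
    (n : ι → ℤ) :
    ∃ C : ℝ, ∀ a b : ℝ, ‖(∫ t in a..b, UnitAddTorus.mFourier n (linearFlow lam t)) -
      (b - a : ℝ) * ∫ x, UnitAddTorus.mFourier n x‖ ≤ C := by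
  rcases eq_or_ne n 0 with rfl | hn
  · exact ⟨0, fun a b => by simp [UnitAddTorus.mFourier_zero, measureReal_univ_unitAddTorus]⟩
  · have hfreq : ∑ i, n i * lam i ≠ 0 := fun h =>
      hn (funext (Fintype.linearIndependent_iff.mp hlam n (by simpa using h)))
    have hc : (2 * Real.pi * (∑ i, n i * lam i : ℝ) * I : ℂ) ≠ 0 :=
      mul_ne_zero (mul_ne_zero (by simp) (ofReal_ne_zero.mpr hfreq)) I_ne_zero
    refine ⟨2 / ‖(2 * Real.pi * (∑ i, n i * lam i : ℝ) * I : ℂ)‖, fun a b => ?_⟩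
    simp only [mFourier_linearFlow]
    rw [integral_mFourier_eq_zero hn, mul_zero, sub_zero]
    exact norm_integral_exp_mul_le hc (by rw [mul_I_re, neg_eq_zero]; norm_cast) a b

theorem integrable_of_continuousMap (f : C(UnitAddTorus ι, ℂ)) : Integrable f :=
  f.continuous.integrable_of_hasCompactSupport (HasCompactSupport.of_compactSpace _)

theorem exists_norm_integral_linearFlow_sub_le_of_mem_span (hlam : LinearIndependent ℤ lam)
    {g : C(UnitAddTorus ι, ℂ)}
    (hg : g ∈ Submodule.span ℂ (range (UnitAddTorus.mFourier (d := ι)))) :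
    ∃ C : ℝ, ∀ a b : ℝ,
      ‖(∫ t in a..b, g (linearFlow lam t)) - (b - a : ℝ) * ∫ x, g x‖ ≤ C := by
  induction hg using Submodule.span_induction with
  | mem f hf =>
    obtain ⟨n, rfl⟩ := hf
    exact exists_norm_integral_mFourier_linearFlow_sub_le hlam n
  | zero => exact ⟨0, by simp⟩
  | add f g _ _ hf hg =>
    obtain ⟨C, hC⟩ := hf
    obtain ⟨D, hD⟩ := hg
    refine ⟨C + D, fun a b => ?_⟩
    refine le_trans (le_of_eq ?_) ((norm_add_le _ _).trans (add_le_add (hC a b) (hD a b)))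
    simp only [ContinuousMap.add_apply]
    rw [intervalIntegral.integral_add (intervalIntegrable_comp_linearFlow f lam a b)
      (intervalIntegrable_comp_linearFlow g lam a b),
      integral_add (integrable_of_continuousMap f) (integrable_of_continuousMap g)]
    congr 1
    ring
  | smul c f _ hf =>
    obtain ⟨C, hC⟩ := hf
    refine ⟨‖c‖ * C, fun a b => ?_⟩
    refine le_trans (le_of_eq ?_) (mul_le_mul_of_nonneg_left (hC a b) (norm_nonneg c))
    simp only [ContinuousMap.smul_apply, smul_eq_mul]
    rw [intervalIntegral.integral_const_mul, integral_const_mul, ← norm_mul]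
    congr 1
    ring

theorem exists_norm_integral_linearFlow_sub_lt (hlam : LinearIndependent ℤ lam)
    (f : C(UnitAddTorus ι, ℂ)) {ε : ℝ} (hε : 0 < ε) :
    ∃ L : ℝ, 0 < L ∧ ∀ a : ℝ,
      ‖(∫ t in a..(a + L), f (linearFlow lam t)) - L * ∫ x, f x‖ < ε * L := by
  obtain ⟨g, hg, hfg⟩ : ∃ g ∈ Submodule.span ℂ (range (UnitAddTorus.mFourier (d := ι))),
      dist f g < ε / 3 := Metric.mem_closure_iff.mp
    (by rw [← Submodule.topologicalClosure_coe, UnitAddTorus.span_mFourier_closure_eq_top]; trivial)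
    (ε / 3) (by positivity)
  have hpt (x) : ‖f x - g x‖ ≤ ε / 3 :=
    dist_eq_norm (f x) (g x) ▸ (ContinuousMap.dist_apply_le_dist x).trans hfg.le
  obtain ⟨C, hC⟩ := exists_norm_integral_linearFlow_sub_le_of_mem_span hlam hg
  have hC0 : 0 ≤ C := (norm_nonneg _).trans (hC 0 0)
  set L := 3 * C / ε + 1 with hL
  have hL0 : 0 < L := by positivity
  refine ⟨L, hL0, fun a => ?_⟩
  have htime : ‖∫ t in a..(a + L), (f (linearFlow lam t) - g (linearFlow lam t))‖ ≤ ε / 3 * L := by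
    simpa [abs_of_pos hL0] using intervalIntegral.norm_integral_le_of_norm_le_const
      (a := a) (b := a + L) fun t _ => hpt (linearFlow lam t)
  have hspace : ‖∫ x, (f x - g x)‖ ≤ ε / 3 := by
    simpa [measureReal_univ_unitAddTorus] using
      norm_integral_le_of_norm_le_const (μ := volume) (Eventually.of_forall hpt)
  have hsplit : (∫ t in a..(a + L), f (linearFlow lam t)) - L * ∫ x, f x =
      (∫ t in a..(a + L), (f (linearFlow lam t) - g (linearFlow lam t))) +
        ((∫ t in a..(a + L), g (linearFlow lam t)) - (a + L - a : ℝ) * ∫ x, g x) -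
          L * ∫ x, (f x - g x) := by
    rw [intervalIntegral.integral_sub (intervalIntegrable_comp_linearFlow f lam _ _)
      (intervalIntegrable_comp_linearFlow g lam _ _),
      integral_sub (integrable_of_continuousMap f) (integrable_of_continuousMap g),
      add_sub_cancel_left]
    ring
  calc ‖(∫ t in a..(a + L), f (linearFlow lam t)) - L * ∫ x, f x‖
      ≤ ε / 3 * L + C + L * (ε / 3) := by
        rw [hsplit]
        refine (norm_sub_le _ _).trans (add_le_add ((norm_add_le _ _).trans
          (add_le_add htime (hC a (a + L)))) ?_)
        rw [norm_mul, norm_real, Real.norm_of_nonneg hL0.le]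
        gcongr
    _ = ε * L - ε / 3 := by rw [hL]; field_simp; ring
    _ < ε * L := by linarith

end linearFlow

theorem isRelativelyDense_linearFlow_mem {ι : Type*} [Finite ι] {lam : ι → ℝ}
    (hlam : LinearIndependent ℤ lam) {U : Set (UnitAddTorus ι)} (hU : IsOpen U) (hne : U.Nonempty) :
    IsRelativelyDense {t | linearFlow lam t ∈ U} := by
  have := Fintype.ofFinite ι
  obtain ⟨x₀, hx₀⟩ := hne
  obtain ⟨f, hf0, hf1, hf01⟩ := exists_continuous_zero_one_of_isClosed hU.isClosed_compl
    (isClosed_singleton (x := x₀)) (by simpa using hx₀)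
  have hJ : 0 < ∫ x, f x :=
    f.continuous.integral_pos_of_hasCompactSupport_nonneg_nonzero
      (HasCompactSupport.of_compactSpace _) (fun x => (hf01 x).1) (x := x₀) (by simp [hf1 rfl])
  obtain ⟨L, hL0, hL⟩ := exists_norm_integral_linearFlow_sub_lt hlam
    ⟨fun x => (f x : ℂ), by fun_prop⟩ hJ
  refine ⟨L, fun a => ?_⟩
  by_contra! hmiss
  have hzero : ∫ t in a..(a + L), (f (linearFlow lam t) : ℂ) = 0 := by
    refine (intervalIntegral.integral_congr fun t ht => ?_).trans intervalIntegral.integral_zero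
    rw [uIcc_of_le (by linarith)] at ht
    simpa using hf0 fun htU => hmiss t htU ht
  have hlt := hL a
  simp only [ContinuousMap.coe_mk] at hlt
  rw [hzero, integral_complex_ofReal, zero_sub, norm_neg, norm_mul, norm_real, norm_real,
    Real.norm_of_nonneg hL0.le, Real.norm_of_nonneg hJ.le, mul_comm] at hlt
  exact lt_irrefl _ hlt

theorem isRelativelyDense_circleExp_mem {ι : Type*} {lam : ι → ℝ} (hlam : LinearIndependent ℤ lam)
    {U : Set (ι → Circle)} (hU : IsOpen U) (hne : U.Nonempty) :
    IsRelativelyDense {t | (fun i => Circle.exp (lam i * t)) ∈ U} := by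
  obtain ⟨z, hz⟩ := hne
  obtain ⟨J, u, hu, hJU⟩ := isOpen_pi_iff.mp hU z hz
  have hscale : LinearIndependent ℤ fun i : J => (2 * Real.pi)⁻¹ * lam i :=
    (hlam.comp _ Subtype.val_injective).map_injOn
      (LinearMap.mulLeft ℤ ((2 * Real.pi)⁻¹ : ℝ)) (mul_right_injective₀ (by positivity)).injOn
  have hopen : IsOpen (univ.pi fun i : J => AddCircle.toCircle (T := 1) ⁻¹' u i) :=
    isOpen_set_pi finite_univ fun i _ => (hu i i.2).1.preimage AddCircle.continuous_toCircle
  choose x hx using (AddCircle.homeomorphCircle (T := 1) one_ne_zero).surjective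
  refine (isRelativelyDense_linearFlow_mem hscale hopen ⟨fun i => x (z i), fun i _ => ?_⟩).mono
    fun t ht => hJU fun i hi => ?_
  · rw [mem_preimage, ← AddCircle.homeomorphCircle_apply one_ne_zero, hx]
    exact (hu i i.2).2
  · have := ht ⟨i, hi⟩ trivial
    rw [mem_preimage, linearFlow, AddCircle.toCircle_apply_mk] at this
    convert! this using 2
    field_simp

theorem factorization_prod_primes_pow (s : Finset Nat.Primes) (k : Nat.Primes → ℕ)
    {q : Nat.Primes} (hq : q ∈ s) : (∏ p ∈ s, (p : ℕ) ^ k p).factorization q = k q := by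
  rw [Nat.factorization_prod fun p _ => pow_ne_zero _ p.2.ne_zero, Finset.sum_apply',
    Finset.sum_eq_single_of_mem q hq]
  · simp [q.2.factorization_self]
  · intro p _ hpq
    have : (p : ℕ) ≠ q := fun h => hpq (Subtype.ext h)
    simp [p.2.factorization, this]

theorem linearIndependent_log_primes :
    LinearIndependent ℤ fun p : Nat.Primes => Real.log p := by
  rw [linearIndependent_iff']
  intro s n hn q hq
  have hlog (k : Nat.Primes → ℕ) :
      Real.log (∏ p ∈ s, (p : ℕ) ^ k p : ℕ) = ∑ p ∈ s, k p * Real.log p := by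
    push_cast
    rw [Real.log_prod fun p _ => pow_ne_zero _ (Nat.cast_ne_zero.mpr p.2.ne_zero)]
    simp
  have hpos (k : Nat.Primes → ℕ) : (0 : ℝ) < (∏ p ∈ s, (p : ℕ) ^ k p : ℕ) :=
    Nat.cast_pos.mpr (Finset.prod_pos fun p _ => pow_pos p.2.pos _)
  have heq : ∏ p ∈ s, (p : ℕ) ^ (n p).toNat = ∏ p ∈ s, (p : ℕ) ^ (-n p).toNat := by
    refine Nat.cast_injective (R := ℝ) (Real.log_injOn_pos (hpos _) (hpos _) ?_)
    rw [hlog, hlog, ← sub_eq_zero, ← Finset.sum_sub_distrib, ← hn]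
    refine Finset.sum_congr rfl fun p _ => ?_
    rw [← sub_mul, zsmul_eq_mul]
    congr 1
    exact_mod_cast Int.toNat_sub_toNat_neg (n p)
  have := congrArg (fun m => m.factorization q) heq
  simp only [factorization_prod_primes_pow s (fun p => (n p).toNat) hq,
    factorization_prod_primes_pow s (fun p => (-n p).toNat) hq] at this
  lia

/-! ### Twists of Dirichlet series -/

/-- The completely multiplicative extension to `ℕ` of a function on the primes, with value `1`
at `0`. -/
def primeExt {M : Type*} [CommMonoid M] (y : Nat.Primes → M) (n : ℕ) : M :=
  n.factorization.prod fun p k => if hp : p.Prime then y ⟨p, hp⟩ ^ k else 1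

section primeExt

variable {M : Type*} [CommMonoid M]

theorem primeExt_one_left (n : ℕ) : primeExt (1 : Nat.Primes → M) n = 1 := by
  rw [primeExt, Finsupp.prod]
  refine Finset.prod_eq_one fun p _ => ?_
  split_ifs
  exacts [one_pow _, rfl]

theorem primeExt_one_right (y : Nat.Primes → M) : primeExt y 1 = 1 := by
  simp [primeExt]

theorem primeExt_mul (y : Nat.Primes → M) {m n : ℕ} (hm : m ≠ 0) (hn : n ≠ 0) :
    primeExt y (m * n) = primeExt y m * primeExt y n := by
  rw [primeExt, Nat.factorization_mul hm hn]
  refine Finsupp.prod_add_index' (fun p => ?_) fun p k l => ?_ <;> split_ifs <;> simp [pow_add]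

theorem primeExt_prime (y : Nat.Primes → M) (p : Nat.Primes) : primeExt y p = y p := by
  rw [primeExt, p.2.factorization, Finsupp.prod_single_index (by simp), dif_pos p.2, pow_one]
  rfl

theorem primeExt_restrict {f : ℕ → M} (h1 : f 1 = 1)
    (hmul : ∀ m n, m ≠ 0 → n ≠ 0 → f (m * n) = f m * f n) {n : ℕ} (hn : n ≠ 0) :
    primeExt (fun p : Nat.Primes => f p) n = f n := by
  induction n using Nat.recOnMul with
  | zero => exact absurd rfl hn
  | one => rw [primeExt_one_right, h1]
  | prime p hp => exact primeExt_prime (fun p : Nat.Primes => f p) ⟨p, hp⟩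
  | mul a b iha ihb =>
    have ha : a ≠ 0 := left_ne_zero_of_mul hn
    have hb : b ≠ 0 := right_ne_zero_of_mul hn
    rw [primeExt_mul _ ha hb, hmul a b ha hb, iha ha, ihb hb]

theorem primeExt_pow_left (y : Nat.Primes → M) (k : ℕ) {n : ℕ}
    (hn : n ≠ 0) : primeExt (y ^ k) n = primeExt y n ^ k := by
  have hy : y ^ k = fun p : Nat.Primes => primeExt y p ^ k :=
    funext fun p => by rw [primeExt_prime, Pi.pow_apply]
  rw [hy]
  exact primeExt_restrict (f := fun n => primeExt y n ^ k)
    (by rw [primeExt_one_right, one_pow])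
    (fun m n hm hn => by rw [primeExt_mul y hm hn, mul_pow]) hn

theorem continuous_primeExt [TopologicalSpace M] [ContinuousMul M] (n : ℕ) :
    Continuous fun y : Nat.Primes → M => primeExt y n :=
  continuous_finsetProd n.factorization.support fun p _ => by
    dsimp only
    split_ifs
    · exact (continuous_apply _).pow _
    · exact continuous_const

end primeExt

/-- The twist `n ↦ a n χ(n)` of the coefficients of a Dirichlet series by the completely
multiplicative function with values `χ p` at the primes. -/
noncomputable def twist (a : ℕ → ℂ) (χ : Nat.Primes → Circle) (n : ℕ) : ℂ := a n * primeExt χ n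

/-- The values `p ^ (-iτ)` at the primes, twisting by which is the translation `s ↦ s + iτ`. -/
noncomputable def verticalCharacter (τ : ℝ) (p : Nat.Primes) : Circle :=
  Circle.exp (-Real.log p * τ)

/-- A bound for the distance between the twists by `χ` and `ψ` of the Dirichlet series with
coefficients `a`, uniform on the half-plane `σ ≤ re s`; see `norm_LSeries_twist_sub_le`. -/
noncomputable def twistDist (a : ℕ → ℂ) (σ : ℝ) (χ ψ : Nat.Primes → Circle) : ℝ :=
  ∑' n, ‖LSeries.term a σ n‖ * ‖(primeExt χ n - primeExt ψ n : ℂ)‖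

section twist

variable (a : ℕ → ℂ) (χ ψ : Nat.Primes → Circle) (s : ℂ)

theorem twist_one_right : twist a 1 = a := by
  ext n
  simp [twist, primeExt_one_left]

theorem term_twist (n : ℕ) :
    LSeries.term (twist a χ) s n = primeExt χ n * LSeries.term a s n := by
  rcases eq_or_ne n 0 with rfl | hn
  · simp
  · rw [LSeries.term_of_ne_zero hn, LSeries.term_of_ne_zero hn, twist]
    ring

theorem LSeriesSummable_twist_iff : LSeriesSummable (twist a χ) s ↔ LSeriesSummable a s := by
  simp only [LSeriesSummable, ← summable_norm_iff (f := LSeries.term _ s), term_twist, norm_mul,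
    Circle.norm_coe, one_mul]

theorem abscissaOfAbsConv_twist :
    LSeries.abscissaOfAbsConv (twist a χ) = LSeries.abscissaOfAbsConv a := by
  simp only [LSeries.abscissaOfAbsConv, LSeriesSummable_twist_iff]

theorem primeExt_verticalCharacter (τ : ℝ) {n : ℕ} (hn : n ≠ 0) :
    primeExt (verticalCharacter τ) n = Circle.exp (-Real.log n * τ) := by
  refine primeExt_restrict (f := fun n : ℕ => Circle.exp (-Real.log n * τ)) (by simp)
    (fun m n hm hn => ?_) hn
  rw [Nat.cast_mul, Real.log_mul (by simpa) (by simpa), neg_add, add_mul, Circle.exp_add]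

theorem LSeries_twist_verticalCharacter (τ : ℝ) :
    LSeries (twist a (verticalCharacter τ)) s = LSeries a (s + τ * I) := by
  refine tsum_congr fun n => ?_
  rcases eq_or_ne n 0 with rfl | hn
  · simp
  · have hn' : (n : ℂ) ≠ 0 := Nat.cast_ne_zero.mpr hn
    rw [term_twist, primeExt_verticalCharacter τ hn, LSeries.term_of_ne_zero hn,
      LSeries.term_of_ne_zero hn, cpow_add _ _ hn', cpow_def_of_ne_zero hn' (τ * I), Circle.coe_exp,
      ← natCast_log, div_mul_eq_div_div_swap, div_eq_mul_inv _ (exp _), ← exp_neg]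
    push_cast
    ring_nf

variable {a} {σ : ℝ} {s}

theorem norm_term_mul_norm_primeExt_sub_le (n : ℕ) :
    ‖LSeries.term a σ n‖ * ‖(primeExt χ n - primeExt ψ n : ℂ)‖ ≤ ‖LSeries.term a σ n‖ * 2 := by
  gcongr
  exact (norm_sub_le _ _).trans (by simp only [Circle.norm_coe]; norm_num)

theorem norm_LSeries_twist_sub_le (ha : LSeriesSummable a σ) (hs : σ ≤ s.re) :
    ‖LSeries (twist a χ) s - LSeries (twist a ψ) s‖ ≤ twistDist a σ χ ψ := by
  have has : LSeriesSummable a s := ha.of_re_le_re hs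
  rw [LSeries, LSeries, ← (((LSeriesSummable_twist_iff a χ s).mpr has).tsum_sub
    ((LSeriesSummable_twist_iff a ψ s).mpr has))]
  refine tsum_of_norm_bounded (Summable.hasSum ?_) fun n => ?_
  · exact (ha.norm.mul_right 2).of_nonneg_of_le (fun n => by positivity)
      (norm_term_mul_norm_primeExt_sub_le χ ψ)
  · rw [term_twist, term_twist, ← sub_mul, norm_mul, mul_comm]
    gcongr
    exact LSeries.norm_term_le_of_re_le_re a (by simpa using hs) n

variable (a σ) in
theorem twistDist_self : twistDist a σ χ χ = 0 := by simp [twistDist]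

theorem continuous_twistDist_left (ha : LSeriesSummable a σ) :
    Continuous fun χ => twistDist a σ χ ψ := by
  refine continuous_tsum (fun n => ?_) (ha.norm.mul_right 2) fun n χ => ?_
  · have := continuous_primeExt (M := Circle) n
    fun_prop
  · rw [Real.norm_of_nonneg (by positivity)]
    exact norm_term_mul_norm_primeExt_sub_le χ ψ n

theorem isRelativelyDense_twistDist_verticalCharacter_lt (ha : LSeriesSummable a σ) {ε : ℝ}
    (hε : 0 < ε) : IsRelativelyDense {τ | twistDist a σ (verticalCharacter τ) ψ < ε} :=
  isRelativelyDense_circleExp_mem linearIndependent_log_primes.neg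
    (isOpen_Iio.preimage (continuous_twistDist_left ψ ha))
    ⟨ψ, by simpa only [mem_preimage, mem_Iio, twistDist_self] using hε⟩

end twist

/-! ### Zeros of twists and of their vertical translates -/

theorem exists_mem_closedBall_eq_zero_of_norm_lt {G : ℂ → ℂ} {z₀ : ℂ} {r : ℝ} (hr : 0 < r)
    (hG : DiffContOnCl ℂ G (ball z₀ r)) (hlt : ∀ z ∈ sphere z₀ r, ‖G z₀‖ < ‖G z‖) :
    ∃ z ∈ closedBall z₀ r, G z = 0 := by
  by_contra! hne
  rw [← closure_ball z₀ hr.ne'] at hne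
  obtain ⟨z, hz, hmax⟩ := exists_mem_frontier_isMaxOn_norm isBounded_ball
    (nonempty_ball.mpr hr) (hG.inv hne)
  rw [frontier_ball z₀ hr.ne'] at hz
  have hle : ‖(G z₀)⁻¹‖ ≤ ‖(G z)⁻¹‖ := hmax (subset_closure (mem_ball_self hr))
  rw [norm_inv, norm_inv] at hle
  have hpos : 0 < ‖G z₀‖ := norm_pos_iff.mpr (hne z₀ (subset_closure (mem_ball_self hr)))
  exact ((inv_lt_inv₀ (hpos.trans (hlt z hz)) hpos).mpr (hlt z hz)).not_ge hle

theorem exists_forall_norm_sub_lt_exists_eq_zero {g : ℂ → ℂ} {z₀ : ℂ} (hg : AnalyticAt ℂ g z₀)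
    (h0 : g z₀ = 0) (hne : ¬ ∀ᶠ z in 𝓝 z₀, g z = 0) {R : ℝ} (hR : 0 < R) :
    ∃ ε : ℝ, 0 < ε ∧ ∀ G : ℂ → ℂ, DifferentiableOn ℂ G (closedBall z₀ R) →
      (∀ z ∈ closedBall z₀ R, ‖G z - g z‖ < ε) → ∃ z ∈ closedBall z₀ R, G z = 0 := by
  obtain ⟨ρ, hρ, hball⟩ := Metric.eventually_nhds_iff_ball.mp (eventually_nhdsWithin_iff.mp
    (hg.eventually_eq_zero_or_eventually_ne_zero.resolve_left hne) |>.and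
      hg.eventually_analyticAt)
  set r := min R (ρ / 2)
  have hr : 0 < r := by positivity
  have hrρ : closedBall z₀ r ⊆ ball z₀ ρ :=
    closedBall_subset_ball ((min_le_right _ _).trans_lt (half_lt_self hρ))
  have hrR : closedBall z₀ r ⊆ closedBall z₀ R := closedBall_subset_closedBall (min_le_left _ _)
  have hcont : ContinuousOn (fun z => ‖g z‖) (sphere z₀ r) := fun z hz =>
    (hball z (hrρ (sphere_subset_closedBall hz))).2.continuousAt.norm.continuousWithinAt
  obtain ⟨w, hw, hmin⟩ := (isCompact_sphere z₀ r).exists_isMinOn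
    (NormedSpace.sphere_nonempty.mpr hr.le) hcont
  have hgw : g w ≠ 0 :=
    (hball w (hrρ (sphere_subset_closedBall hw))).1 (ne_of_mem_sphere hw hr.ne')
  refine ⟨‖g w‖ / 2, by positivity, fun G hG hGg => ?_⟩
  have hdiff : DiffContOnCl ℂ G (ball z₀ r) :=
    DifferentiableOn.diffContOnCl ((closure_ball z₀ hr.ne').symm ▸ hG.mono hrR)
  obtain ⟨z, hz, hGz⟩ := exists_mem_closedBall_eq_zero_of_norm_lt hr hdiff fun z hz => by
    have hcenter := hGg z₀ (mem_closedBall_self hR.le)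
    rw [h0, sub_zero] at hcenter
    have hcircle := hGg z (hrR (sphere_subset_closedBall hz))
    have hgz : ‖g w‖ ≤ ‖g z‖ := hmin hz
    linarith [norm_le_norm_add_norm_sub' (g z) (G z), norm_sub_rev (g z) (G z)]
  exact ⟨z, hrR hz, hGz⟩

theorem not_eventually_LSeries_eq_zero {f : ℕ → ℂ} {s₀ s₁ : ℂ}
    (hs₀ : LSeries.abscissaOfAbsConv f < s₀.re) (hs₁ : LSeries.abscissaOfAbsConv f < s₁.re)
    (hne : LSeries f s₁ ≠ 0) : ¬ ∀ᶠ s in 𝓝 s₀, LSeries f s = 0 := by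
  intro h
  have hupper : IsUpperSet {x : ℝ | LSeries.abscissaOfAbsConv f < x} := fun x y hxy hx =>
    lt_of_lt_of_le (b := (x : EReal)) hx (EReal.coe_le_coe_iff.mpr hxy)
  have hconn : IsPreconnected {s : ℂ | LSeries.abscissaOfAbsConv f < s.re} :=
    (hupper.ordConnected.convex.linear_preimage reLm).isPreconnected
  exact hne ((LSeries_analyticOnNhd f).eqOn_zero_of_preconnected_of_eventuallyEq_zero hconn hs₀ h
    hs₁)

theorem isRelativelyDense_im_image_LSeries_zeros {a : ℕ → ℂ} {χ : Nat.Primes → Circle} {s₀ s₁ : ℂ}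
    (hs₀ : LSeries.abscissaOfAbsConv a < s₀.re) (hs₁ : LSeries.abscissaOfAbsConv a < s₁.re)
    (h0 : LSeries (twist a χ) s₀ = 0) (hne : LSeries (twist a χ) s₁ ≠ 0) {η : ℝ} (hη : 0 < η) :
    IsRelativelyDense (im '' {s | |s.re - s₀.re| < η ∧ LSeries a s = 0}) := by
  obtain ⟨σ, haσ, hσ⟩ := EReal.lt_iff_exists_real_btwn.mp hs₀
  rw [EReal.coe_lt_coe_iff] at hσ
  set R := min (η / 2) (s₀.re - σ)
  have hR : 0 < R := by have := sub_pos.mpr hσ; positivity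
  have hre {s : ℂ} (hs : s ∈ closedBall s₀ R) : |s.re - s₀.re| ≤ R := by
    rw [← sub_re]
    exact (abs_re_le_norm _).trans (mem_closedBall_iff_norm.mp hs)
  have hσ_le {s : ℂ} (hs : s ∈ closedBall s₀ R) : σ ≤ s.re := by
    linarith [(abs_le.mp (hre hs)).1, min_le_right (η / 2) (s₀.re - σ)]
  have hanalytic (ψ : Nat.Primes → Circle) {s : ℂ} (hs : LSeries.abscissaOfAbsConv a < s.re) :
      AnalyticAt ℂ (LSeries (twist a ψ)) s :=
    LSeries_analyticOnNhd _ _ (by rwa [mem_ofPred, abscissaOfAbsConv_twist])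
  obtain ⟨ε, hε, hzero⟩ := exists_forall_norm_sub_lt_exists_eq_zero (hanalytic χ hs₀) h0
    (not_eventually_LSeries_eq_zero (by rwa [abscissaOfAbsConv_twist])
      (by rwa [abscissaOfAbsConv_twist]) hne) hR
  have hsum : LSeriesSummable a σ := LSeriesSummable_of_abscissaOfAbsConv_lt_re haσ
  refine (isRelativelyDense_twistDist_verticalCharacter_lt χ hsum hε).of_forall_exists_dist_le
    (r := |s₀.im| + R) fun τ hτ => ?_
  obtain ⟨z, hz, hGz⟩ := hzero (LSeries (twist a (verticalCharacter τ)))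
    (fun s hs => (hanalytic _ (haσ.trans_le
      (by exact_mod_cast hσ_le hs))).differentiableAt.differentiableWithinAt)
    (fun s hs => (norm_LSeries_twist_sub_le _ _ hsum (hσ_le hs)).trans_lt hτ)
  rw [LSeries_twist_verticalCharacter] at hGz
  refine ⟨_, mem_image_of_mem im ⟨?_, hGz⟩, ?_⟩
  · have : R < η := (min_le_left _ _).trans_lt (half_lt_self hη)
    simpa using (hre hz).trans_lt this
  · have him : |z.im - s₀.im| ≤ R := by
      rw [← sub_im]
      exact (abs_im_le_norm _).trans (mem_closedBall_iff_norm.mp hz)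
    rw [Real.dist_eq, add_im, im_ofReal_mul, I_im, mul_one, add_sub_cancel_right]
    linarith [abs_sub_abs_le_abs_sub z.im s₀.im]

/-! ### The Dirichlet series of the double zeta value -/

section EulerProduct

variable (χ : Nat.Primes → Circle)

theorem twist_convolution (a b : ℕ → ℂ) :
    twist (LSeries.convolution a b) χ = LSeries.convolution (twist a χ) (twist b χ) := by
  ext n
  simp only [twist, LSeries.convolution_def, Finset.sum_mul]
  refine Finset.sum_congr rfl fun p hp => ?_
  obtain ⟨rfl, hn⟩ := Nat.mem_divisorsAntidiagonal.mp hp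
  rw [primeExt_mul χ (left_ne_zero_of_mul hn) (right_ne_zero_of_mul hn), Circle.coe_mul]
  ring

theorem twist_sub (a b : ℕ → ℂ) : twist (a - b) χ = twist a χ - twist b χ :=
  funext fun _ => sub_mul _ _ _

/-- The terms `χ(n) n ^ (-s)` of a twist of the zeta series, as a completely multiplicative
function of `n`. -/
noncomputable def zetaTwistTermHom (s : ℂ) : ℕ →*₀ ℂ where
  toFun := LSeries.term (twist 1 χ) s
  map_zero' := LSeries.term_zero _ _
  map_one' := by simp [twist, primeExt_one_right]
  map_mul' m n := by
    rcases eq_or_ne m 0 with rfl | hm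
    · simp
    rcases eq_or_ne n 0 with rfl | hn
    · simp
    rw [LSeries.term_of_ne_zero hm, LSeries.term_of_ne_zero hn,
      LSeries.term_of_ne_zero (mul_ne_zero hm hn), twist, primeExt_mul χ hm hn, Nat.cast_mul,
      natCast_mul_natCast_cpow, Circle.coe_mul, twist, twist, ← mul_div_mul_comm]
    simp

theorem zetaTwistTermHom_prime (s : ℂ) (p : Nat.Primes) :
    zetaTwistTermHom χ s p = χ p * (p : ℂ) ^ (-s) := by
  simp [zetaTwistTermHom, LSeries.term_of_ne_zero p.2.ne_zero, twist, primeExt_prime, cpow_neg,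
    div_eq_mul_inv]

variable {s : ℂ}

theorem LSeriesSummable_twist_one (hs : 1 < s.re) : LSeriesSummable (twist 1 χ) s :=
  (LSeriesSummable_twist_iff 1 χ s).mpr (LSeriesSummable_one_iff.mpr hs)

theorem summable_norm_zetaTwistTermHom (hs : 1 < s.re) :
    Summable fun n => ‖zetaTwistTermHom χ s n‖ :=
  (LSeriesSummable_twist_one χ hs).norm

theorem hasProd_LSeries_twist_one (hs : 1 < s.re) :
    HasProd (fun p : Nat.Primes => (1 - χ p * (p : ℂ) ^ (-s))⁻¹) (LSeries (twist 1 χ) s) := by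
  simpa only [zetaTwistTermHom_prime] using!
    EulerProduct.eulerProduct_completely_multiplicative_hasProd
      (summable_norm_zetaTwistTermHom χ hs)

theorem LSeries_twist_one_ne_zero (hs : 1 < s.re) : LSeries (twist 1 χ) s ≠ 0 := by
  have h := EulerProduct.exp_tsum_primes_log_eq_tsum (summable_norm_zetaTwistTermHom χ hs)
  exact ne_of_eq_of_ne h.symm (exp_ne_zero _)

theorem hasProd_LSeries_twist_one_sq_div (hs : 1 < s.re) :
    HasProd (fun p : Nat.Primes => (1 + χ p * (p : ℂ) ^ (-s)) / (1 - χ p * (p : ℂ) ^ (-s)))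
      (LSeries (twist 1 χ) s ^ 2 / LSeries (twist 1 (χ ^ 2)) (2 * s)) := by
  have hs2 : 1 < (2 * s).re := by simp; linarith
  rw [sq]
  convert! ((hasProd_LSeries_twist_one χ hs).mul (hasProd_LSeries_twist_one χ hs)).div₀
    (hasProd_LSeries_twist_one (χ ^ 2) hs2) (LSeries_twist_one_ne_zero (χ ^ 2) hs2) using 2 with p
  set x := (χ p : ℂ) * (p : ℂ) ^ (-s) with hx
  have hnorm : ‖x‖ < 1 := by
    rw [hx, norm_mul, Circle.norm_coe, one_mul]
    exact (norm_prime_cpow_le_one_half p hs).trans_lt (by norm_num)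
  have hsq : ((χ ^ 2) p : ℂ) * (p : ℂ) ^ (-(2 * s)) = x ^ 2 := by
    rw [mul_pow, ← cpow_nat_mul, Pi.pow_apply, Circle.coe_pow]
    norm_num
  have hx1 : 1 - x ≠ 0 := sub_ne_zero.mpr fun h => by simp [← h] at hnorm
  rw [hsq]
  field_simp
  ring

end EulerProduct

/-- The Dirichlet coefficients of `2 ζ₂(s, s) = ζ(s) ^ 2 - ζ(2 * s)`. -/
noncomputable def doubleZetaCoeff : ℕ → ℂ :=
  LSeries.convolution 1 1 - {n : ℕ | IsSquare n}.indicator 1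

section doubleZetaCoeff

variable (χ : Nat.Primes → Circle) {s : ℂ}

theorem term_twist_indicator_isSquare (n : ℕ) :
    LSeries.term (twist ({n : ℕ | IsSquare n}.indicator 1) χ) s (n ^ 2) =
      LSeries.term (twist 1 (χ ^ 2)) (2 * s) n := by
  rcases eq_or_ne n 0 with rfl | hn
  · simp
  · have hcpow : ((n ^ 2 : ℕ) : ℂ) ^ s = (n : ℂ) ^ (2 * s) := by
      rw [sq, Nat.cast_mul, natCast_mul_natCast_cpow, two_mul, cpow_add _ _ (by simpa)]
    have hχ : primeExt χ (n ^ 2) = primeExt (χ ^ 2) n := by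
      rw [primeExt_pow_left χ 2 hn, sq n, primeExt_mul χ hn hn, sq]
    have hone : {n : ℕ | IsSquare n}.indicator (1 : ℕ → ℂ) (n ^ 2) = 1 :=
      indicator_of_mem (IsSquare.sq n) 1
    rw [LSeries.term_of_ne_zero hn, LSeries.term_of_ne_zero (pow_ne_zero 2 hn), twist, twist,
      hcpow, hχ, hone, Pi.one_apply]

theorem LSeriesHasSum_twist_indicator_isSquare (hs : 1 < (2 * s).re) :
    LSeriesHasSum (twist ({n : ℕ | IsSquare n}.indicator 1) χ) s
      (LSeries (twist 1 (χ ^ 2)) (2 * s)) := by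
  have hinj : Function.Injective fun n : ℕ => n ^ 2 := Nat.pow_left_injective two_ne_zero
  refine (hinj.hasSum_iff fun n hn => ?_).mp ?_
  · have : ¬ IsSquare n := fun ⟨m, hm⟩ => hn ⟨m, (sq m).trans hm.symm⟩
    simp [LSeries.term_def, twist, this]
  · rw [Function.comp_def, funext (term_twist_indicator_isSquare χ)]
    exact (LSeriesSummable_twist_one (χ ^ 2) hs).LSeriesHasSum

theorem LSeriesHasSum_twist_doubleZetaCoeff (hs : 1 < s.re) :
    LSeriesHasSum (twist doubleZetaCoeff χ) s
      (LSeries (twist 1 χ) s ^ 2 - LSeries (twist 1 (χ ^ 2)) (2 * s)) := by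
  have hL := LSeriesSummable_twist_one χ hs
  rw [doubleZetaCoeff, twist_sub, twist_convolution, sq]
  exact (hL.LSeriesHasSum.convolution hL.LSeriesHasSum).sub
    (LSeriesHasSum_twist_indicator_isSquare χ (by simp; linarith))

theorem abscissaOfAbsConv_doubleZetaCoeff_le : LSeries.abscissaOfAbsConv doubleZetaCoeff ≤ 1 := by
  refine LSeries.abscissaOfAbsConv_le_of_forall_lt_LSeriesSummable (x := 1) fun y hy => ?_
  exact (LSeriesSummable_twist_iff _ 1 _).mp (LSeriesHasSum_twist_doubleZetaCoeff 1
    (by simpa using hy)).LSeriesSummable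

theorem LSeries_doubleZetaCoeff (hs : 1 < s.re) :
    LSeries doubleZetaCoeff s = riemannZeta s ^ 2 - riemannZeta (2 * s) := by
  have h := (LSeriesHasSum_twist_doubleZetaCoeff 1 hs).LSeries_eq
  rwa [one_pow, twist_one_right, twist_one_right, LSeries_one_eq_riemannZeta hs,
    LSeries_one_eq_riemannZeta (by simp; linarith)] at h

end doubleZetaCoeff

theorem exp_two_mul_arctan_mul_I (x : ℝ) :
    exp ((2 * Real.arctan x : ℝ) * I) = (1 + I * x) / (1 - I * x) := by
  have h (y : ℝ) : 1 + I * y ≠ 0 := fun h => by simpa using congrArg re h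
  have hsub : 1 - I * x ≠ 0 := by simpa [sub_eq_add_neg] using h (-x)
  have hlog : ((2 * Real.arctan x : ℝ) * I : ℂ) = log ((1 + I * x) / (1 - I * x)) := by
    rw [ofReal_mul, ofReal_ofNat, ofReal_arctan, arctan, mul_comm (x : ℂ) I]
    linear_combination (-log ((1 + I * x) / (1 - I * x))) * I_mul_I
  rw [hlog, exp_log (div_ne_zero (h x) hsub)]

/-- The continuous argument of `∏ (1 + i p ^ (-σ)) / (1 - i p ^ (-σ))`, the product over the
primes `p`. -/
noncomputable def primeArctanSum (σ : ℝ) : ℝ :=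
  ∑' p : Nat.Primes, 2 * Real.arctan ((p : ℝ) ^ (-σ))

section primeArctanSum

variable {σ : ℝ}

theorem two_mul_arctan_rpow_nonneg (σ : ℝ) (p : Nat.Primes) :
    0 ≤ 2 * Real.arctan ((p : ℝ) ^ (-σ)) := by
  have : 0 ≤ (p : ℝ) ^ (-σ) := by positivity
  have := Real.arctan_nonneg.mpr this
  positivity

theorem two_mul_arctan_rpow_le {σ₀ : ℝ} (hσ : σ₀ ≤ σ) (p : Nat.Primes) :
    2 * Real.arctan ((p : ℝ) ^ (-σ)) ≤ 2 * (p : ℝ) ^ (-σ₀) := by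
  have hp : (1 : ℝ) ≤ p := by exact_mod_cast p.2.one_le
  have hx : 0 ≤ (p : ℝ) ^ (-σ) := by positivity
  have harctan : Real.arctan ((p : ℝ) ^ (-σ)) ≤ (p : ℝ) ^ (-σ) :=
    (Real.le_tan (Real.arctan_nonneg.mpr hx) (Real.arctan_lt_pi_div_two _)).trans_eq
      (Real.tan_arctan _)
  have : (p : ℝ) ^ (-σ) ≤ (p : ℝ) ^ (-σ₀) := by gcongr
  linarith

theorem summable_two_mul_arctan_rpow (hσ : 1 < σ) :
    Summable fun p : Nat.Primes => 2 * Real.arctan ((p : ℝ) ^ (-σ)) :=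
  ((Nat.Primes.summable_rpow.mpr (neg_lt_neg hσ)).mul_left 2).of_nonneg_of_le
    (two_mul_arctan_rpow_nonneg σ) (two_mul_arctan_rpow_le le_rfl)

theorem continuous_two_mul_arctan_rpow (p : Nat.Primes) :
    Continuous fun σ : ℝ => 2 * Real.arctan ((p : ℝ) ^ (-σ)) :=
  continuous_const.mul (Real.continuous_arctan.comp
    ((Real.continuous_const_rpow (Nat.cast_ne_zero.mpr p.2.ne_zero)).comp continuous_neg))

theorem continuousOn_primeArctanSum : ContinuousOn primeArctanSum (Ioi 1) := by
  refine continuousOn_of_forall_continuousAt fun σ (hσ : 1 < σ) => ?_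
  obtain ⟨σ₀, h1, hσ₀⟩ := exists_between hσ
  refine ContinuousOn.continuousAt (s := Ici σ₀) ?_ (Ici_mem_nhds hσ₀)
  refine continuousOn_tsum (fun p => (continuous_two_mul_arctan_rpow p).continuousOn)
    ((Nat.Primes.summable_rpow.mpr (neg_lt_neg h1)).mul_left 2) fun p τ hτ => ?_
  rw [Real.norm_of_nonneg (two_mul_arctan_rpow_nonneg τ p)]
  exact two_mul_arctan_rpow_le hτ p

theorem not_summable_two_mul_arctan_rpow_neg_one :
    ¬ Summable fun p : Nat.Primes => 2 * Real.arctan ((p : ℝ) ^ (-1 : ℝ)) := by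
  intro h
  have hzero : Tendsto (fun p : Nat.Primes => (p : ℝ) ^ (-1 : ℝ)) cofinite (𝓝 0) :=
    (tendsto_rpow_neg_atTop one_pos).comp (tendsto_natCast_atTop_atTop.comp
      (Nat.cofinite_eq_atTop ▸ Nat.Primes.coe_nat_injective.tendsto_cofinite))
  have hO : (fun x : ℝ => x) =O[𝓝 0] fun x => 2 * Real.arctan x := by
    have harctan := ((Real.hasDerivAt_arctan 0).const_mul 2).isTheta_sub (by norm_num)
    simpa [Function.comp_def] using harctan.isBigO_symm
  exact absurd (Nat.Primes.summable_rpow.mp (summable_of_isBigO h (hO.comp_tendsto hzero)))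
    (lt_irrefl _)

theorem tendsto_primeArctanSum_atTop : Tendsto primeArctanSum (𝓝[>] 1) atTop := by
  refine tendsto_atTop.mpr fun B => ?_
  obtain ⟨F, hF⟩ : ∃ F : Finset Nat.Primes, B < ∑ p ∈ F, 2 * Real.arctan ((p : ℝ) ^ (-1 : ℝ)) := by
    by_contra! hB
    exact not_summable_two_mul_arctan_rpow_neg_one
      (summable_of_sum_le (two_mul_arctan_rpow_nonneg 1) hB)
  have hcont : Continuous fun σ : ℝ => ∑ p ∈ F, 2 * Real.arctan ((p : ℝ) ^ (-σ)) :=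
    continuous_finsetSum F fun p _ => continuous_two_mul_arctan_rpow p
  filter_upwards [nhdsWithin_le_nhds (hcont.continuousAt.eventually_const_lt hF),
    self_mem_nhdsWithin] with σ hB hσ
  exact hB.le.trans ((summable_two_mul_arctan_rpow hσ).sum_le_tsum F
    fun p _ => two_mul_arctan_rpow_nonneg σ p)

theorem exists_Ici_subset_primeArctanSum_image {δ : ℝ} (hδ : 0 < δ) :
    ∃ B, Ici B ⊆ primeArctanSum '' Ioo 1 (1 + δ) :=
  ⟨_, isPreconnected_Ioo.intermediate_value_Ici (a := 1 + δ / 2) ⟨by linarith, by linarith⟩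
    (le_principal_iff.mpr (Ioo_mem_nhdsGT (by linarith)))
    (continuousOn_primeArctanSum.mono Ioo_subset_Ioi_self) tendsto_primeArctanSum_atTop⟩

theorem exists_exp_primeArctanSum_mul_I_eq {δ : ℝ} (hδ : 0 < δ) (θ : ℝ) :
    ∃ σ ∈ Ioo 1 (1 + δ), exp (primeArctanSum σ * I) = exp (θ * I) := by
  obtain ⟨B, hB⟩ := exists_Ici_subset_primeArctanSum_image hδ
  obtain ⟨k, hk⟩ := exists_nat_ge ((B - θ) / (2 * Real.pi))
  rw [div_le_iff₀ Real.two_pi_pos, sub_le_iff_le_add'] at hk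
  obtain ⟨σ, hσ, h⟩ := hB hk
  refine ⟨σ, hσ, exp_eq_exp_iff_exists_int.mpr ⟨k, ?_⟩⟩
  rw [h]
  push_cast
  ring

end primeArctanSum

theorem hasProd_exp_primeArctanSum {σ : ℝ} (hσ : 1 < σ) :
    HasProd (fun p : Nat.Primes => (1 + I * (p : ℂ) ^ (-(σ : ℂ))) / (1 - I * (p : ℂ) ^ (-(σ : ℂ))))
      (exp (primeArctanSum σ * I)) := by
  have hsum : HasSum (fun p : Nat.Primes => ((2 * Real.arctan ((p : ℝ) ^ (-σ)) : ℝ) : ℂ))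
      (primeArctanSum σ) := hasSum_ofReal.mpr (summable_two_mul_arctan_rpow hσ).hasSum
  convert! (hsum.mul_right I).cexp using 2 with p
  rw [Function.comp_apply, exp_two_mul_arctan_mul_I, ofReal_cpow p.1.cast_nonneg]
  simp

/-- The completely multiplicative twist with the value `i` at every prime. -/
noncomputable def quarterTurn : Nat.Primes → Circle := fun _ => Circle.exp (Real.pi / 2)

theorem LSeries_twist_quarterTurn_doubleZetaCoeff {σ : ℝ} (hσ : 1 < σ) :
    LSeries (twist doubleZetaCoeff quarterTurn) σ =
      (exp (primeArctanSum σ * I) - 1) * LSeries (twist 1 (quarterTurn ^ 2)) (2 * σ) := by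
  have hI (p : Nat.Primes) : (quarterTurn p : ℂ) = I := by simp [quarterTurn]
  have hprod := hasProd_LSeries_twist_one_sq_div quarterTurn (s := σ) (by simpa)
  simp only [hI] at hprod
  rw [(LSeriesHasSum_twist_doubleZetaCoeff quarterTurn (by simpa)).LSeries_eq, sub_one_mul,
    ← hprod.unique (hasProd_exp_primeArctanSum hσ),
    div_mul_cancel₀ _ (LSeries_twist_one_ne_zero _ (by simp; linarith))]

theorem exists_LSeries_twist_quarterTurn_doubleZetaCoeff_eq_zero {δ : ℝ} (hδ : 0 < δ) :
    ∃ σ ∈ Ioo 1 (1 + δ), LSeries (twist doubleZetaCoeff quarterTurn) (σ : ℝ) = 0 := by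
  obtain ⟨σ, hσ, h⟩ := exists_exp_primeArctanSum_mul_I_eq hδ 0
  refine ⟨σ, hσ, ?_⟩
  rw [LSeries_twist_quarterTurn_doubleZetaCoeff hσ.1, h]
  simp

theorem exists_LSeries_twist_quarterTurn_doubleZetaCoeff_ne_zero :
    ∃ σ : ℝ, 1 < σ ∧ LSeries (twist doubleZetaCoeff quarterTurn) σ ≠ 0 := by
  obtain ⟨σ, ⟨hσ, -⟩, h⟩ := exists_exp_primeArctanSum_mul_I_eq one_pos Real.pi
  refine ⟨σ, hσ, ?_⟩
  rw [LSeries_twist_quarterTurn_doubleZetaCoeff hσ, h, exp_pi_mul_I]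
  exact mul_ne_zero (by norm_num) (LSeries_twist_one_ne_zero _ (by simp; linarith))

theorem isRelativelyDense_im_image_zeta_sq_sub_zeros {δ : ℝ} (hδ : 0 < δ) :
    IsRelativelyDense (im '' {s | 1 < s.re ∧ s.re < 1 + δ ∧
      riemannZeta s ^ 2 - riemannZeta (2 * s) = 0}) := by
  obtain ⟨σ, hσ, h0⟩ := exists_LSeries_twist_quarterTurn_doubleZetaCoeff_eq_zero hδ
  obtain ⟨σ', hσ', hne⟩ := exists_LSeries_twist_quarterTurn_doubleZetaCoeff_ne_zero
  have habs {x : ℝ} (hx : 1 < x) : LSeries.abscissaOfAbsConv doubleZetaCoeff < (x : ℂ).re :=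
    abscissaOfAbsConv_doubleZetaCoeff_le.trans_lt (by exact_mod_cast hx)
  refine (isRelativelyDense_im_image_LSeries_zeros (habs hσ.1) (habs hσ') h0 hne
    (η := min (σ - 1) (1 + δ - σ)) (lt_min (sub_pos.mpr hσ.1) (sub_pos.mpr hσ.2))).mono
    (image_mono fun s hs => ?_)
  obtain ⟨hre, hs0⟩ := hs
  rw [ofReal_re, lt_min_iff, abs_lt, abs_lt] at hre
  have hs1 : 1 < s.re := by linarith [hre.1.1]
  exact ⟨hs1, by linarith [hre.2.2], by rwa [← LSeries_doubleZetaCoeff hs1]⟩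

end

/-- For every `δ > 0` the function `ζ(s)² - ζ(2s)` has at least `cT`
zeros in `{1 < Re s < 1+δ, Im s ∈ [0,T]}`; in particular the Euler–Zagier double zeta
value `ζ₂(s,s) = (ζ(s)² - ζ(2s))/2` has infinitely many zeros in `Re s > 1`. -/
theorem statement_15 (δ : ℝ) (hδ : 0 < δ) :
    (∃ c : ℝ, 0 < c ∧ ∃ T₀ : ℝ, 0 < T₀ ∧ ∀ T : ℝ, T₀ ≤ T →
      AtLeastCard {s : ℂ | 1 < s.re ∧ s.re < 1 + δ ∧ s.im ∈ Set.Icc 0 T ∧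
        riemannZeta s ^ 2 - riemannZeta (2 * s) = 0} (c * T)) ∧
    {s : ℂ | 1 < s.re ∧ (riemannZeta s ^ 2 - riemannZeta (2 * s)) / 2 = 0}.Infinite := by
  have hdense := isRelativelyDense_im_image_zeta_sq_sub_zeros hδ
  refine ⟨?_, (hdense.infinite.of_image im).mono fun s hs => ⟨hs.1, by simp [hs.2.2]⟩⟩
  simpa only [Set.mem_ofPred_eq, and_assoc, and_comm, and_left_comm] using
    hdense.atLeastCard_of_im_image
end
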